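/- arXiv:1509.03212 — 6 statements merged into one kernel-verified Lean document; each statement's English description precedes it below -/
import Mathlib

section
/- Let (G,X,r) be a single-sink buy-at-bulk instance with |X| = k ≥ 1 terminals to be connected to the sink r, let h ≥ 1 be an integer, and let G^up be the h-level upward layered expansion of G (with parameter k). There is an absolute constant C such that if (G,X,r) has a feasible solution of objective value φ, then the single-sink instance on G^up connecting the level-h copies of the terminals of X to the level-0 copy of r has a feasible solution of objective value at most C·h·k^{1/h}·φ. -/
namespace BaB

/-- A walk from `s` to `t` using edges from `E`, given as the list of traversed edges. -/
def IsWalk {W : Type} (E : Set (W × W)) : W → W → List (W × W) → Prop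
  | s, t, [] => s = t
  | s, t, e :: p => e.1 = s ∧ e ∈ E ∧ IsWalk E e.2 t p

/-- Buy-at-bulk (two-metric) objective value of a collection of paths. -/
def objVal {A : Type} [DecidableEq A] (c ℓ : A → ℝ) {k : ℕ} (P : Fin k → List A) : ℝ :=
  (∑ e ∈ Finset.univ.biUnion fun i => (P i).toFinset, c e) + ∑ i, ((P i).map ℓ).sum

/-- `g` is a flow of value `v` from `s` to `r`, supported on `E`. -/
def IsFlow {W : Type} [Fintype W] (E : Set (W × W)) (g : W × W → ℝ) (s r : W) (v : ℝ) : Prop :=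
  (∀ e, 0 ≤ g e) ∧ (∀ e, e ∉ E → g e = 0) ∧
  (∀ u, u ≠ s → u ≠ r → (∑ w : W, g (w, u)) = ∑ w : W, g (u, w)) ∧
  (∑ w : W, g (s, w)) - (∑ w : W, g (w, s)) = v

/-- Weight of a walk of `G` in the combined metric `c_e + k^(1-i/h)·ℓ_e` used for the
edge between levels `i` and `i-1` of the layered expansion. -/
noncomputable def upCost {V : Type} (c ℓ : V × V → ℝ) (k h : ℕ) (i : Fin (h + 1))
    (w : List (V × V)) : ℝ :=
  (w.map fun e => c e + (k : ℝ) ^ ((1 : ℝ) - (i : ℕ) / (h : ℝ)) * ℓ e).sum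

/-- Edges of the `h`-level upward layered expansion `G^up`: from the level-`i` copy of
`u` to the level-`(i-1)` copy of `v`, whenever `G` has a directed `u → v` walk. -/
def upEdges {V : Type} (E : Set (V × V)) (h : ℕ) :
    Set ((Fin (h + 1) × V) × (Fin (h + 1) × V)) :=
  {p | ∃ (i j : Fin (h + 1)) (u v : V), p = ((i, u), (j, v)) ∧ (j : ℕ) + 1 = (i : ℕ) ∧
        ∃ w, IsWalk E u v w}

/-- Edges of the `h`-level downward layered expansion `G^down`: from the
level-`(i-1)` copy of `u` to the level-`i` copy of `v`, whenever `G` has a directed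
`u → v` walk. -/
def downEdges {V : Type} (E : Set (V × V)) (h : ℕ) :
    Set ((Fin (h + 1) × V) × (Fin (h + 1) × V)) :=
  {p | ∃ (i j : Fin (h + 1)) (u v : V), p = ((j, u), (i, v)) ∧ (j : ℕ) + 1 = (i : ℕ) ∧
        ∃ w, IsWalk E u v w}

/-- `(c', ℓ')` are valid costs and lengths for `G^up`: the cost of each edge between
levels `i` and `i-1` is the minimum over directed `u → v` walks `w` of
`Σ_{e ∈ w} (c_e + k^(1-i/h) ℓ_e)`, and its length is `Σ_{e ∈ w} ℓ_e` for a walk `w`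
attaining this minimum. -/
def UpCostsValid {V : Type} (E : Set (V × V)) (c ℓ : V × V → ℝ) (k h : ℕ)
    (c' ℓ' : (Fin (h + 1) × V) × (Fin (h + 1) × V) → ℝ) : Prop :=
  ∀ (i j : Fin (h + 1)) (u v : V), ((i, u), (j, v)) ∈ upEdges E h →
    ∃ w, IsWalk E u v w ∧
      IsLeast {t | ∃ w', IsWalk E u v w' ∧ t = upCost c ℓ k h i w'} (upCost c ℓ k h i w) ∧
      c' ((i, u), (j, v)) = upCost c ℓ k h i w ∧ ℓ' ((i, u), (j, v)) = (w.map ℓ).sum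

/-- Valid costs and lengths for `G^down` (the exponent is determined by the deeper
level `i` of the edge). -/
def DownCostsValid {V : Type} (E : Set (V × V)) (c ℓ : V × V → ℝ) (k h : ℕ)
    (c'' ℓ'' : (Fin (h + 1) × V) × (Fin (h + 1) × V) → ℝ) : Prop :=
  ∀ (i j : Fin (h + 1)) (u v : V), ((j, u), (i, v)) ∈ downEdges E h →
    ∃ w, IsWalk E u v w ∧
      IsLeast {t | ∃ w', IsWalk E u v w' ∧ t = upCost c ℓ k h i w'} (upCost c ℓ k h i w) ∧
      c'' ((j, u), (i, v)) = upCost c ℓ k h i w ∧ ℓ'' ((j, u), (i, v)) = (w.map ℓ).sum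


theorem tree_exists {V : Type} [Fintype V] [DecidableEq V] (H : Set (V × V))
    (ℓ : V × V → ℝ) (hl : ∀ e, 0 ≤ ℓ e) (r : V) {M : Type} [Fintype M] (x : M → V)
    (P : M → List (V × V)) (hP : ∀ m, IsWalk H (x m) r (P m)) :
    ∃ (R : Set V) (f : V → V) (rank : V → ℕ) (d : V → ℝ), f r = r ∧ r ∈ R ∧
      (∀ v, v ≠ r → rank (f v) < rank v) ∧ (∀ v, 0 ≤ d v) ∧
      (∀ v ∈ R, v ≠ r → (v, f v) ∈ H ∧ f v ∈ R ∧ ℓ (v, f v) + d (f v) ≤ d v) ∧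
      (∀ m, x m ∈ R ∧ d (x m) ≤ ((P m).map ℓ).sum) := by
  classical
  have hsum : ∀ p : List (V × V), 0 ≤ (p.map ℓ).sum := by
    intro p
    apply List.sum_nonneg
    intro y hy
    obtain ⟨e, _, rfl⟩ := List.mem_map.1 hy
    exact hl e
  obtain ⟨N, hN⟩ : ∃ N : ℕ, ∀ m, (P m).length ≤ N :=
    ⟨∑ m, (P m).length, fun m => Finset.single_le_sum (f := fun m => (P m).length)
      (fun _ _ => Nat.zero_le _) (Finset.mem_univ m)⟩
  let Wk : V → Set (List (V × V)) := fun v => {p | IsWalk H v r p ∧ p.length ≤ N}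
  have hfin : ∀ v, (Wk v).Finite := fun v =>
    (List.finite_length_le (V × V) N).subset (fun p hp => hp.2)
  let R : Set V := {v | (Wk v).Nonempty}
  let key : List (V × V) → ℝ ×ₗ ℕ := fun p => toLex ((p.map ℓ).sum, p.length)
  have hbest : ∀ v, ∃ p, v ∈ R → (p ∈ Wk v ∧ ∀ q ∈ Wk v, key p ≤ key q) := by
    intro v
    by_cases hv : v ∈ R
    · obtain ⟨p, hp, hq⟩ := Set.exists_min_image (Wk v) key (hfin v) hv
      exact ⟨p, fun _ => ⟨hp, hq⟩⟩
    · exact ⟨[], fun h => absurd h hv⟩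
  choose p hp using hbest
  let d : V → ℝ := fun v => ((p v).map ℓ).sum
  have hfst : ∀ {a b : List (V × V)}, key a ≤ key b → (a.map ℓ).sum ≤ (b.map ℓ).sum := by
    intro a b hab
    rcases Prod.Lex.le_iff.1 hab with h | h
    · exact le_of_lt h
    · exact le_of_eq h.1
  have hnext : ∀ v, ∃ u, v ∈ R → v ≠ r →
      (v, u) ∈ H ∧ u ∈ R ∧ ℓ (v, u) + d u ≤ d v ∧ key (p u) < key (p v) := by
    intro v
    by_cases hv : v ∈ R ∧ v ≠ r
    · obtain ⟨hv, hvr⟩ := hv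
      obtain ⟨⟨hw, hlen⟩, hmin⟩ := hp v hv
      rcases hpv : p v with _ | ⟨⟨a, u⟩, q⟩
      · rw [hpv] at hw
        exact absurd hw hvr
      · rw [hpv] at hw hlen
        obtain ⟨h1, h2, h3⟩ := hw
        simp only at h1 h3
        subst h1
        have hq : q ∈ Wk u := ⟨h3, by simp at hlen; omega⟩
        have huR : u ∈ R := ⟨q, hq⟩
        have hle := (hp u huR).2 q hq
        refine ⟨u, fun _ _ => ⟨h2, huR, ?_, ?_⟩⟩
        · have := hfst hle
          simp only [d, hpv, List.map_cons, List.sum_cons]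
          linarith
        · refine lt_of_le_of_lt hle ?_
          rw [Prod.Lex.lt_iff]
          simp only [key, List.map_cons, List.sum_cons, List.length_cons, ofLex_toLex]
          rcases (hl (a, u)).lt_or_eq with h | h
          · left; linarith
          · right; exact ⟨by linarith, by omega⟩
    · exact ⟨r, fun h1 h2 => absurd ⟨h1, h2⟩ hv⟩
  choose g hg using hnext
  have hrR : r ∈ R := ⟨[], rfl, Nat.zero_le _⟩
  have hxR : ∀ m, P m ∈ Wk (x m) := fun m => ⟨hP m, hN m⟩
  refine ⟨R, fun v => if v ∈ R ∧ v ≠ r then g v else r,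
    fun v => if v ∈ R then (Finset.univ.filter fun u => u ∈ R ∧ key (p u) < key (p v)).card
      else Fintype.card V + 1, d, by simp, hrR, ?_, fun v => hsum _, ?_, ?_⟩
  · intro v hv
    by_cases hvR : v ∈ R
    · obtain ⟨h1, h2, h3, h4⟩ := hg v hvR hv
      simp only [hvR, hv, ne_eq, not_false_eq_true, and_self, if_true, h2]
      apply Finset.card_lt_card
      rw [Finset.ssubset_iff_of_subset]
      · exact ⟨g v, by simp [h2, h4], by simp⟩
      · intro u hu
        simp only [Finset.mem_filter, Finset.mem_univ, true_and] at hu ⊢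
        exact ⟨hu.1, hu.2.trans h4⟩
    · simp only [hvR, false_and, if_false, hrR, if_true]
      exact Nat.lt_succ_of_le (Finset.card_le_univ _)
  · intro v hvR hv
    obtain ⟨h1, h2, h3, h4⟩ := hg v hvR hv
    simp only [hvR, hv, ne_eq, not_false_eq_true, and_self, if_true]
    exact ⟨h1, h2, h3⟩
  · intro m
    have : x m ∈ R := ⟨_, hxR m⟩
    exact ⟨this, hfst ((hp _ this).2 _ (hxR m))⟩

/-- `v` is on the trajectory of `x` under the parent function `f`. -/
def On {V : Type} (f : V → V) (x v : V) : Prop := ∃ j : ℕ, f^[j] x = v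

/-- `v` is on the trajectory of `x`, and nothing up to and including `v` is in `S`. -/
def Pass {V : Type} (f : V → V) (rank : V → ℕ) (S : V → Prop) (x v : V) : Prop :=
  On f x v ∧ ∀ w, On f x w → rank v ≤ rank w → ¬ S w

theorem On.refl {V : Type} (f : V → V) (x : V) : On f x x := ⟨0, rfl⟩

theorem On.cons {V : Type} {f : V → V} {x v : V} (h : On f (f x) v) : On f x v := by
  obtain ⟨j, hj⟩ := h
  exact ⟨j + 1, by rw [Function.iterate_succ_apply]; exact hj⟩

theorem On.cases {V : Type} {f : V → V} {x v : V} (h : On f x v) : v = x ∨ On f (f x) v := by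
  obtain ⟨j, hj⟩ := h
  cases j with
  | zero => left; exact hj.symm
  | succ j => right; exact ⟨j, by rw [Function.iterate_succ_apply] at hj; exact hj⟩

section
variable {V : Type} [Fintype V] [DecidableEq V] {r : V} {f : V → V} {rank : V → ℕ}

theorem iter_rank (hfr : f r = r) (hrank : ∀ v, v ≠ r → rank (f v) < rank v) (x : V) (j : ℕ) :
    f^[j] x = x ∨ rank (f^[j] x) < rank x := by
  induction j with
  | zero => left; rfl
  | succ j ih =>
    rw [Function.iterate_succ_apply']
    by_cases h : f^[j] x = r
    · rw [h, hfr, ← h]; exact ih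
    · right
      have := hrank _ h
      rcases ih with ih | ih
      · rw [ih] at this ⊢; exact this
      · omega

theorem On.rank_le (hfr : f r = r) (hrank : ∀ v, v ≠ r → rank (f v) < rank v) {x v : V}
    (h : On f x v) : rank v ≤ rank x := by
  obtain ⟨j, rfl⟩ := h
  rcases iter_rank hfr hrank x j with h | h
  · rw [h]
  · exact h.le

theorem On.eq_of_rank (hfr : f r = r) (hrank : ∀ v, v ≠ r → rank (f v) < rank v) {x u v : V}
    (hu : On f x u) (hv : On f x v) (h : rank u = rank v) : u = v := by
  obtain ⟨i, rfl⟩ := hu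
  obtain ⟨j, rfl⟩ := hv
  rcases le_total i j with hij | hij
  · obtain ⟨a, rfl⟩ := Nat.exists_eq_add_of_le' hij
    rw [Function.iterate_add_apply] at h ⊢
    rcases iter_rank hfr hrank (f^[i] x) a with h' | h'
    · exact h'.symm
    · omega
  · obtain ⟨a, rfl⟩ := Nat.exists_eq_add_of_le' hij
    rw [Function.iterate_add_apply] at h ⊢
    rcases iter_rank hfr hrank (f^[j] x) a with h' | h'
    · exact h'
    · omega

open Classical in
theorem stop_set_exists (f : V → V) (rank : V → ℕ) (r : V) {M : Type} [Fintype M] (a : M → V)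
    (T : ℝ) : ∃ S : V → Prop, ∀ v, S v ↔ (v = r ∨ T < ((Finset.univ.filter fun m =>
      On f (a m) v ∧ ∀ u, On f (a m) u → rank v < rank u → ¬ S u).card : ℝ)) := by
  have wf : WellFounded (fun u v : V => rank v < rank u) := by
    have : Std.Irrefl (fun u v : V => rank v < rank u) := ⟨fun a => lt_irrefl _⟩
    have : IsTrans V (fun u v : V => rank v < rank u) := ⟨fun a b c h1 h2 => lt_trans h2 h1⟩
    exact Finite.wellFounded_of_trans_of_irrefl _
  let F : (v : V) → ((u : V) → rank v < rank u → Prop) → Prop := fun v ih =>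
    (v = r ∨ T < ((Finset.univ.filter fun m =>
      On f (a m) v ∧ ∀ u, On f (a m) u → ∀ h : rank v < rank u, ¬ ih u h).card : ℝ))
  refine ⟨wf.fix F, fun v => ?_⟩
  rw [wf.fix_eq]

open Classical in
theorem stop_walk (E : Set (V × V)) (R : Set V) (c ℓ : V × V → ℝ) (d : V → ℝ)
    (hfr : f r = r) (hrank : ∀ v, v ≠ r → rank (f v) < rank v)
    (hR : ∀ v ∈ R, v ≠ r → (v, f v) ∈ E ∧ f v ∈ R ∧ ℓ (v, f v) + d (f v) ≤ d v)
    (S : V → Prop) (hS : S r) (n : ℕ) : ∀ x, rank x < n → x ∈ R →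
    ∃ y, y ∈ R ∧ S y ∧ On f x y ∧ (∀ w, On f x w → rank y < rank w → ¬ S w) ∧
      ∃ p, IsWalk E x y p ∧
        (p.map c).sum = ∑ v ∈ Finset.univ.filter (Pass f rank S x), c (v, f v) ∧
        (p.map ℓ).sum ≤ d x - d y := by
  induction n with
  | zero =>
    intro x hx
    omega
  | succ n ih =>
    intro x hx hxR
    by_cases hSx : S x
    · refine ⟨x, hxR, hSx, On.refl f x, ?_, [], rfl, ?_, by simp⟩
      · intro w hw h
        have := hw.rank_le hfr hrank
        omega
      · rw [Finset.filter_false_of_mem]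
        · simp
        · intro v _ hv
          exact hv.2 x (On.refl f x) (hv.1.rank_le hfr hrank) hSx
    · have hxr : x ≠ r := fun h => hSx (h ▸ hS)
      have hlt := hrank x hxr
      obtain ⟨h1, h2, h3⟩ := hR x hxR hxr
      obtain ⟨y, hyR, hSy, hon, hfirst, p, hw, hc, hd⟩ := ih (f x) (by omega) h2
      refine ⟨y, hyR, hSy, hon.cons, ?_, (x, f x) :: p, ⟨rfl, h1, hw⟩, ?_, ?_⟩
      · intro w hw hr
        rcases hw.cases with rfl | hw
        · exact hSx
        · exact hfirst w hw hr
      · have : Finset.univ.filter (Pass f rank S x)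
            = insert x (Finset.univ.filter (Pass f rank S (f x))) := by
          ext v
          simp only [Finset.mem_filter, Finset.mem_univ, true_and, Finset.mem_insert]
          constructor
          · rintro ⟨hv, hv'⟩
            rcases hv.cases with h | h
            · exact Or.inl h
            · exact Or.inr ⟨h, fun w hw => hv' w hw.cons⟩
          · rintro (rfl | ⟨hv, hv'⟩)
            · refine ⟨On.refl f v, fun w hw hle => ?_⟩
              rcases hw.cases with rfl | hw
              · exact hSx
              · have := hw.rank_le hfr hrank
                omega
            · refine ⟨hv.cons, fun w hw hle => ?_⟩
              rcases hw.cases with rfl | hw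
              · exact hSx
              · exact hv' w hw hle
        rw [this, Finset.sum_insert, List.map_cons, List.sum_cons, hc]
        simp only [Finset.mem_filter, Finset.mem_univ, true_and]
        intro h
        have := h.1.rank_le hfr hrank
        omega
      · simp only [List.map_cons, List.sum_cons]
        linarith

theorem On.mem (hfr : f r = r) {R : Set V} (hR : ∀ v ∈ R, v ≠ r → f v ∈ R) {x v : V}
    (hx : x ∈ R) (h : On f x v) : v ∈ R := by
  obtain ⟨j, rfl⟩ := h
  induction j with
  | zero => exact hx
  | succ j ih =>
    rw [Function.iterate_succ_apply']
    by_cases h : f^[j] x = r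
    · rw [h, hfr, ← h]; exact ih
    · exact hR _ ih h

open Classical in
/-- One level of the construction: every terminal moves up to its stopping vertex. -/
theorem level_step (E : Set (V × V)) (R : Set V) (c ℓ : V × V → ℝ) (d : V → ℝ)
    (hc : ∀ e, 0 ≤ c e) (hfr : f r = r) (hrank : ∀ v, v ≠ r → rank (f v) < rank v)
    (hR : ∀ v ∈ R, v ≠ r → (v, f v) ∈ E ∧ f v ∈ R ∧ ℓ (v, f v) + d (f v) ≤ d v)
    {M : Type} [Fintype M] (a : M → V) (ha : ∀ m, a m ∈ R) (T : ℝ) (hT : 0 ≤ T) :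
    ∃ (b : M → V) (p : M → List (V × V)), (∀ m, b m ∈ R) ∧ (∀ m m', a m = a m' → b m = b m') ∧
      (∀ m, a m = r → b m = r) ∧
      (∀ m, b m ≠ r → T < ((Finset.univ.filter fun m' => b m' = b m).card : ℝ)) ∧
      (∀ m, IsWalk E (a m) (b m) (p m)) ∧
      (∀ m, ((p m).map ℓ).sum ≤ d (a m) - d (b m)) ∧
      ∑ m, ((p m).map c).sum ≤
        T * ∑ v ∈ Finset.univ.filter (fun v => v ∈ R ∧ v ≠ r), c (v, f v) := by
  obtain ⟨S, hS⟩ := stop_set_exists f rank r a T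
  have hSr : S r := (hS r).2 (Or.inl rfl)
  have hw := fun x => stop_walk E R c ℓ d hfr hrank hR S hSr (rank x + 1) x (Nat.lt_succ_self _)
  choose! st hst using hw
  have hst' : ∀ m, ∃ p, IsWalk E (a m) (st (a m)) p ∧
        (p.map c).sum = ∑ v ∈ Finset.univ.filter (Pass f rank S (a m)), c (v, f v) ∧
        (p.map ℓ).sum ≤ d (a m) - d (st (a m)) := fun m => (hst (a m) (ha m)).2.2.2.2
  choose p hp1 hp2 hp3 using hst'
  refine ⟨fun m => st (a m), p, fun m => (hst _ (ha m)).1, fun m m' h => by simp only [h],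
    ?_, ?_, hp1, hp3, ?_⟩
  · intro m hm
    have hon := (hst _ (ha m)).2.2.1
    simp only [hm] at hon ⊢
    obtain ⟨j, hj⟩ := hon
    rw [← hj, Function.iterate_fixed hfr]
  · intro m hm
    rcases (hS _).1 (hst _ (ha m)).2.1 with h | h
    · exact absurd h hm
    · refine lt_of_lt_of_le h ?_
      norm_cast
      apply Finset.card_le_card
      intro m' hm'
      simp only [Finset.mem_filter, Finset.mem_univ, true_and] at hm' ⊢
      obtain ⟨_, h2, h3, h4, _⟩ := hst _ (ha m')
      apply On.eq_of_rank hfr hrank h3 hm'.1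
      rcases lt_trichotomy (rank (st (a m'))) (rank (st (a m))) with h | h | h
      · exact absurd (hst _ (ha m)).2.1 (h4 _ hm'.1 h)
      · exact h
      · exact absurd h2 (hm'.2 _ h3 h)
  · have hle : ∀ v, ((Finset.univ.filter fun m => Pass f rank S (a m) v).card : ℝ) ≤ T := by
      intro v
      by_cases hv : S v
      · rw [Finset.filter_false_of_mem]
        · simpa using hT
        · intro m _ hm
          exact hm.2 v hm.1 le_rfl hv
      · have h := (not_congr (hS v)).1 hv
        push Not at h
        refine le_trans ?_ h.2
        norm_cast
        apply Finset.card_le_card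
        intro m hm
        simp only [Finset.mem_filter, Finset.mem_univ, true_and] at hm ⊢
        exact ⟨hm.1, fun u hu hlt => hm.2 u hu hlt.le⟩
    have hmem : ∀ m v, Pass f rank S (a m) v → v ∈ R ∧ v ≠ r := by
      intro m v hv
      refine ⟨hv.1.mem hfr (fun v hv h => (hR v hv h).2.1) (ha m), ?_⟩
      rintro rfl
      exact hv.2 v hv.1 le_rfl hSr
    calc ∑ m, ((p m).map c).sum
        = ∑ m, ∑ v, if Pass f rank S (a m) v then c (v, f v) else 0 := by
          refine Finset.sum_congr rfl fun m _ => ?_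
          rw [hp2, Finset.sum_filter]
      _ = ∑ v, ∑ m, if Pass f rank S (a m) v then c (v, f v) else 0 := Finset.sum_comm
      _ ≤ ∑ v, if v ∈ R ∧ v ≠ r then T * c (v, f v) else 0 := by
          refine Finset.sum_le_sum fun v _ => ?_
          split_ifs with h
          · rw [← Finset.sum_filter, Finset.sum_const, nsmul_eq_mul]
            exact mul_le_mul_of_nonneg_right (hle v) (hc _)
          · apply le_of_eq
            refine Finset.sum_eq_zero fun m _ => ?_
            rw [if_neg fun hh => h (hmem m v hh)]
      _ = _ := by rw [← Finset.sum_filter, Finset.mul_sum]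

end

theorem upCost_eq {V : Type} (c ℓ : V × V → ℝ) (k h : ℕ) (i : Fin (h + 1))
    (w : List (V × V)) : upCost c ℓ k h i w =
      (w.map c).sum + (k : ℝ) ^ ((1 : ℝ) - (i : ℕ) / (h : ℝ)) * (w.map ℓ).sum := by
  unfold upCost
  induction w with
  | nil => simp
  | cons e w ih => simp only [List.map_cons, List.sum_cons, ih]; ring

theorem map_sum_nonneg {A : Type} (g : A → ℝ) (hg : ∀ e, 0 ≤ g e) (p : List A) :
    0 ≤ (p.map g).sum := by
  apply List.sum_nonneg
  intro y hy
  obtain ⟨e, _, rfl⟩ := List.mem_map.1 hy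
  exact hg e

theorem edge_facts {V : Type} (E : Set (V × V)) (c ℓ : V × V → ℝ) (hc : ∀ e, 0 ≤ c e)
    (hl : ∀ e, 0 ≤ ℓ e) (k h : ℕ) (c' ℓ' : (Fin (h + 1) × V) × (Fin (h + 1) × V) → ℝ)
    (hv : UpCostsValid E c ℓ k h c' ℓ') (e : (Fin (h + 1) × V) × (Fin (h + 1) × V))
    (he : e ∈ upEdges E h) :
    0 ≤ c' e ∧ (k : ℝ) ^ ((1 : ℝ) - (e.1.1 : ℕ) / (h : ℝ)) * ℓ' e ≤ c' e ∧
    ∀ p, IsWalk E e.1.2 e.2.2 p → c' e ≤ (p.map c).sum +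
      (k : ℝ) ^ ((1 : ℝ) - (e.1.1 : ℕ) / (h : ℝ)) * (p.map ℓ).sum := by
  obtain ⟨⟨i, u⟩, ⟨j, v⟩⟩ := e
  obtain ⟨w, hw, hleast, h1, h2⟩ := hv i j u v he
  have ht : 0 ≤ (k : ℝ) ^ ((1 : ℝ) - (i : ℕ) / (h : ℝ)) := by positivity
  have hcw := map_sum_nonneg c hc w
  have hlw := map_sum_nonneg ℓ hl w
  refine ⟨?_, ?_, ?_⟩
  · rw [h1, upCost_eq]; positivity
  · rw [h1, h2, upCost_eq]; simp only; linarith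
  · intro p hp
    rw [h1, ← upCost_eq]
    exact hleast.2 ⟨p, hp, rfl⟩

theorem IsWalk.mem {W : Type} {E : Set (W × W)} {p : List (W × W)} :
    ∀ {s t : W}, IsWalk E s t p → ∀ e ∈ p, e ∈ E := by
  induction p with
  | nil => intro s t _ e he; simp at he
  | cons a p ih =>
    intro s t h e he
    rcases List.mem_cons.1 he with rfl | he
    · exact h.2.1
    · exact ih h.2.2 e he

theorem IsWalk.restrict {W : Type} {E : Set (W × W)} {H : Set (W × W)} {p : List (W × W)} :
    ∀ {s t : W}, IsWalk E s t p → (∀ e ∈ p, e ∈ H) → IsWalk H s t p := by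
  induction p with
  | nil => intro s t h _; exact h
  | cons a p ih =>
    intro s t h he
    exact ⟨h.1, he a (by simp), ih h.2.2 fun e h' => he e (by simp [h'])⟩

/-- Sum over an image bounded by a sum over the index set, fibres being large. -/
theorem sum_image_bound {M B : Type} [Fintype M] [DecidableEq B] (e : M → B) (g : B → ℝ)
    (t : ℝ) (ht : 0 < t) (hg : ∀ m, 0 ≤ g (e m))
    (hfib : ∀ m, g (e m) = 0 ∨ t ≤ ((Finset.univ.filter fun m' => e m' = e m).card : ℝ)) :
    t * ∑ x ∈ Finset.univ.image e, g x ≤ ∑ m, g (e m) := by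
  rw [Finset.mul_sum, ← Finset.sum_fiberwise_of_maps_to (s := Finset.univ)
    (t := Finset.univ.image e) (g := e) (fun m _ => Finset.mem_image_of_mem e (Finset.mem_univ m))]
  refine Finset.sum_le_sum fun x hx => ?_
  obtain ⟨m, _, rfl⟩ := Finset.mem_image.1 hx
  have : ∑ m' ∈ Finset.univ.filter (fun m' => e m' = e m), g (e m')
      = ((Finset.univ.filter fun m' => e m' = e m).card : ℝ) * g (e m) := by
    rw [← nsmul_eq_mul, ← Finset.sum_const]
    refine Finset.sum_congr rfl fun m' hm' => ?_
    rw [(Finset.mem_filter.1 hm').2]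
  rw [this]
  rcases hfib m with h | h
  · rw [h]; simp
  · exact mul_le_mul_of_nonneg_right h (hg m)

theorem levels {V : Type} [Fintype V] [DecidableEq V] {r : V} {f : V → V} {rank : V → ℕ}
    (E : Set (V × V)) (R : Set V) (c ℓ : V × V → ℝ) (d : V → ℝ)
    (hc : ∀ e, 0 ≤ c e) (hl : ∀ e, 0 ≤ ℓ e) (hd : ∀ v, 0 ≤ d v)
    (hfr : f r = r) (hrank : ∀ v, v ≠ r → rank (f v) < rank v)
    (hR : ∀ v ∈ R, v ≠ r → (v, f v) ∈ E ∧ f v ∈ R ∧ ℓ (v, f v) + d (f v) ≤ d v)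
    (k h : ℕ) (hk : 1 ≤ k) (hh : 1 ≤ h)
    (c' ℓ' : (Fin (h + 1) × V) × (Fin (h + 1) × V) → ℝ)
    (hv : UpCostsValid E c ℓ k h c' ℓ') (D : ℝ)
    (hD : ∀ [DecidablePred fun v => v ∈ R ∧ v ≠ r],
      ∑ v ∈ Finset.univ.filter (fun v => v ∈ R ∧ v ≠ r), c (v, f v) ≤ D) (i : ℕ) :
    ∀ (hi : i < h + 1) (a : Fin k → V), (∀ m, a m ∈ R) →
      (∀ m, a m ≠ r → (k : ℝ) ^ ((1 : ℝ) - (i : ℕ) / (h : ℝ)) ≤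
        ((Finset.univ.filter fun m' => a m' = a m).card : ℝ)) →
      (i = 0 → ∀ m, a m = r) →
      ∃ P' : Fin k → List ((Fin (h + 1) × V) × (Fin (h + 1) × V)),
        (∀ m, IsWalk (upEdges E h) ((⟨i, hi⟩ : Fin (h + 1)), a m) ((0 : Fin (h + 1)), r) (P' m)) ∧
        objVal c' ℓ' P' ≤ 2 * i * (k : ℝ) ^ ((1 : ℝ) / h) * D + 2 * ∑ m, d (a m) := by
  classical
  induction i with
  | zero =>
    intro hi a ha _ h0
    refine ⟨fun _ => [], fun m => ?_, ?_⟩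
    · rw [h0 rfl m]; rfl
    · simp only [objVal, List.toFinset_nil, List.map_nil, List.sum_nil, Finset.sum_const_zero]
      have : Finset.univ.biUnion (fun _ : Fin k =>
        (∅ : Finset ((Fin (h + 1) × V) × (Fin (h + 1) × V)))) = ∅ := by ext; simp
      rw [this]
      have : 0 ≤ ∑ m, d (a m) := Finset.sum_nonneg fun m _ => hd _
      simpa using this
  | succ i ih =>
    intro hi a ha hcard _
    have hk0 : (0 : ℝ) < k := by exact_mod_cast hk
    have hh0 : (0 : ℝ) < h := by exact_mod_cast hh
    set t : ℝ := (k : ℝ) ^ ((1 : ℝ) - ((i + 1 : ℕ) : ℝ) / (h : ℝ)) with ht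
    set T : ℝ := (k : ℝ) ^ ((1 : ℝ) - (i : ℝ) / (h : ℝ)) with hT
    set q : ℝ := (k : ℝ) ^ ((1 : ℝ) / h) with hq
    have htpos : 0 < t := Real.rpow_pos_of_pos hk0 _
    have hTpos : 0 < T := Real.rpow_pos_of_pos hk0 _
    have hTt : T = q * t := by
      rw [hT, hq, ht, ← Real.rpow_add hk0]
      congr 1
      push_cast
      ring
    obtain ⟨b, p, hbR, hab, har, hbT, hpw, hpl, hpc⟩ :=
      level_step E R c ℓ d hc hfr hrank hR a ha T hTpos.le
    obtain ⟨Q, hQw, hQ⟩ := ih (by omega) b hbR (fun m hm => by convert (hbT m hm).le) (by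
      rintro rfl m
      by_contra hm
      have h1 := hbT m hm
      have h2 : ((Finset.univ.filter fun m' => b m' = b m).card : ℝ) ≤ k := by
        have := Finset.card_le_univ (Finset.univ.filter fun m' => b m' = b m)
        rw [Fintype.card_fin] at this
        exact_mod_cast this
      simp only [hT, Nat.cast_zero, zero_div, sub_zero, Real.rpow_one] at h1
      linarith)
    let e : Fin k → (Fin (h + 1) × V) × (Fin (h + 1) × V) := fun m =>
      (((⟨i + 1, hi⟩ : Fin (h + 1)), a m), ((⟨i, by omega⟩ : Fin (h + 1)), b m))
    have he : ∀ m, e m ∈ upEdges E h := fun m => ⟨_, _, _, _, rfl, rfl, p m, hpw m⟩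
    have hef := fun m => edge_facts E c ℓ hc hl k h c' ℓ' hv (e m) (he m)
    have hc0 : ∀ m, 0 ≤ c' (e m) := fun m => (hef m).1
    have hlc : ∀ m, t * ℓ' (e m) ≤ c' (e m) := fun m => (hef m).2.1
    have hcp : ∀ m, c' (e m) ≤ ((p m).map c).sum + t * ((p m).map ℓ).sum :=
      fun m => (hef m).2.2 (p m) (hpw m)
    refine ⟨fun m => e m :: Q m, fun m => ⟨rfl, he m, hQw m⟩, ?_⟩
    have hsumc : ∑ m, c' (e m) ≤ t * (q * D + (∑ m, d (a m) - ∑ m, d (b m))) := by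
      calc ∑ m, c' (e m) ≤ ∑ m, (((p m).map c).sum + t * (d (a m) - d (b m))) := by
            refine Finset.sum_le_sum fun m _ => (hcp m).trans ?_
            have := mul_le_mul_of_nonneg_left (hpl m) htpos.le
            linarith
        _ = ∑ m, ((p m).map c).sum + t * (∑ m, d (a m) - ∑ m, d (b m)) := by
            rw [Finset.sum_add_distrib, ← Finset.mul_sum, Finset.sum_sub_distrib]
        _ ≤ T * D + t * (∑ m, d (a m) - ∑ m, d (b m)) := by
            have := hpc.trans (mul_le_mul_of_nonneg_left hD hTpos.le)
            linarith
        _ = _ := by rw [hTt]; ring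
    have himg : t * ∑ x ∈ Finset.univ.image e, c' x ≤ ∑ m, c' (e m) := by
      apply sum_image_bound e c' t htpos hc0
      intro m
      by_cases hm : a m = r
      · left
        have hbm := har m hm
        have := (hef m).2.2 [] (show a m = b m by rw [hm, hbm])
        simp only [List.map_nil, List.sum_nil, mul_zero, add_zero] at this
        exact le_antisymm this (hc0 m)
      · right
        refine (hcard m hm).trans ?_
        norm_cast
        apply Finset.card_le_card
        intro m' hm'
        simp only [Finset.mem_filter, Finset.mem_univ, true_and] at hm' ⊢
        simp only [e, hm', hab m' m hm']
    have hlen : t * ∑ m, ℓ' (e m) ≤ ∑ m, c' (e m) := by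
      rw [Finset.mul_sum]
      exact Finset.sum_le_sum fun m _ => hlc m
    have himg' := le_of_mul_le_mul_left (himg.trans hsumc) htpos
    have hlen' := le_of_mul_le_mul_left (hlen.trans hsumc) htpos
    have hobj : objVal c' ℓ' (fun m => e m :: Q m) ≤
        ∑ x ∈ Finset.univ.image e, c' x + ∑ m, ℓ' (e m) + objVal c' ℓ' Q := by
      unfold objVal
      have h1 : (Finset.univ.biUnion fun m => (e m :: Q m).toFinset) =
          Finset.univ.image e ∪ Finset.univ.biUnion fun m => (Q m).toFinset := by
        ext x
        simp only [Finset.mem_biUnion, Finset.mem_univ, true_and, List.mem_toFinset,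
          List.mem_cons, Finset.mem_union, Finset.mem_image, exists_or]
        simp only [eq_comm]
      have h2 := Finset.sum_union_inter (s₁ := Finset.univ.image e)
        (s₂ := Finset.univ.biUnion fun m => (Q m).toFinset) (f := c')
      have h3 : 0 ≤ ∑ x ∈ Finset.univ.image e ∩ Finset.univ.biUnion fun m => (Q m).toFinset,
          c' x := by
        refine Finset.sum_nonneg fun x hx => ?_
        obtain ⟨m, _, rfl⟩ := Finset.mem_image.1 (Finset.mem_inter.1 hx).1
        exact hc0 m
      have h4 : ∑ m, ((e m :: Q m).map ℓ').sum = ∑ m, ℓ' (e m) + ∑ m, ((Q m).map ℓ').sum := by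
        simp only [List.map_cons, List.sum_cons, Finset.sum_add_distrib]
      rw [h1, h4]
      linarith
    push_cast
    linarith

/-- **Pushing a single-sink solution up to the layered expansion.**  There is an
absolute constant `C` such that for every single-sink instance `(G,X,r)` with
`k = |X| ≥ 1` terminals and every `h ≥ 1`: every feasible solution of objective value
`φ` in `G` yields a feasible solution of the single-sink instance on `G^up`
(connecting the level-`h` copies of the terminals to the level-`0` copy of `r`) of
objective value at most `C·h·k^(1/h)·φ`. -/
theorem layered_single_sink_upper_bound :
    ∃ C : ℝ, 0 < C ∧
      ∀ (V : Type) [Fintype V] [DecidableEq V],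
        ∀ (E : Set (V × V)) (c ℓ : V × V → ℝ),
        (∀ e, 0 ≤ c e) → (∀ e, 0 ≤ ℓ e) →
        ∀ (X : List V) (r : V) (k h : ℕ), k = X.length → 1 ≤ k → 1 ≤ h →
        ∀ (c' ℓ' : (Fin (h + 1) × V) × (Fin (h + 1) × V) → ℝ),
        UpCostsValid E c ℓ k h c' ℓ' →
        ∀ P : Fin X.length → List (V × V),
          (∀ m, IsWalk E (X.get m) r (P m)) →
          ∃ P' : Fin X.length → List ((Fin (h + 1) × V) × (Fin (h + 1) × V)),
            (∀ m, IsWalk (upEdges E h) (Fin.last h, X.get m) ((0 : Fin (h + 1)), r) (P' m)) ∧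
            objVal c' ℓ' P' ≤ C * h * (k : ℝ) ^ ((1 : ℝ) / h) * objVal c ℓ P := by
  classical
  refine ⟨2, by norm_num, ?_⟩
  intro V _ _ E c ℓ hc hl X r k h hkX hk hh c' ℓ' hv P hP
  subst hkX
  let H : Finset (V × V) := Finset.univ.biUnion fun i => (P i).toFinset
  have hPH : ∀ m, ∀ e ∈ P m, e ∈ H := fun m e he =>
    Finset.mem_biUnion.2 ⟨m, Finset.mem_univ _, List.mem_toFinset.2 he⟩
  have hHE : ∀ e ∈ H, e ∈ E := by
    intro e he
    obtain ⟨m, _, hm⟩ := Finset.mem_biUnion.1 he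
    exact (hP m).mem e (List.mem_toFinset.1 hm)
  obtain ⟨R, f, rank, d, hfr, hrR, hrank, hd, hR, hx⟩ :=
    tree_exists (H : Set (V × V)) ℓ hl r (fun m => X.get m) P
      (fun m => (hP m).restrict (hPH m))
  have hD : ∀ [DecidablePred fun v => v ∈ R ∧ v ≠ r],
      ∑ v ∈ Finset.univ.filter (fun v => v ∈ R ∧ v ≠ r), c (v, f v) ≤ ∑ e ∈ H, c e := by
    intro _
    rw [← Finset.sum_image (g := fun v => (v, f v)) (f := c)
      (fun u _ v _ huv => (Prod.mk.inj huv).1)]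
    refine Finset.sum_le_sum_of_subset_of_nonneg ?_ fun e _ _ => hc e
    intro e he
    obtain ⟨v, hv', rfl⟩ := Finset.mem_image.1 he
    have := (Finset.mem_filter.1 hv').2
    exact (hR v this.1 this.2).1
  have hh0 : (0 : ℝ) < h := by exact_mod_cast hh
  obtain ⟨P', hP', hobj⟩ := levels E R c ℓ d hc hl hd hfr hrank
    (fun v h1 h2 => ⟨hHE _ (hR v h1 h2).1, (hR v h1 h2).2⟩) X.length h hk hh c' ℓ' hv _ hD h
    (Nat.lt_succ_self h) (fun m => X.get m) (fun m => (hx m).1) (by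
      intro m _
      rw [div_self hh0.ne', sub_self, Real.rpow_zero]
      norm_cast
      exact Finset.card_pos.2 ⟨m, by simp⟩) (by omega)
  refine ⟨P', hP', hobj.trans ?_⟩
  have hq : (1 : ℝ) ≤ (X.length : ℝ) ^ ((1 : ℝ) / h) :=
    Real.one_le_rpow (by exact_mod_cast hk) (by positivity)
  have hh1 : (1 : ℝ) ≤ h := by exact_mod_cast hh
  have hsd : ∑ m, d (X.get m) ≤ ∑ m, ((P m).map ℓ).sum :=
    Finset.sum_le_sum fun m _ => (hx m).2
  have hs0 : 0 ≤ ∑ m, ((P m).map ℓ).sum :=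
    Finset.sum_nonneg fun m _ => map_sum_nonneg ℓ hl _
  have hhq : (1 : ℝ) ≤ h * (X.length : ℝ) ^ ((1 : ℝ) / h) := one_le_mul_of_one_le_of_one_le hh1 hq
  have := mul_le_mul_of_nonneg_right hhq hs0
  change _ ≤ 2 * h * (X.length : ℝ) ^ ((1 : ℝ) / h) * (∑ e ∈ H, c e + ∑ m, ((P m).map ℓ).sum)
  linarith

end BaB
end

section
/- Let c > 0, let 0 < a ≤ b, let T ≥ 0, and let x : [0,T] → ℝ be nondecreasing and differentiable with x(0) ≥ a and x(T) ≤ b. Let S ⊆ [0,T] be a Lebesgue-measurable set such that x′(t) ≥ x(t)/c for every t ∈ S. Then the Lebesgue measure of S is at most c·ln(b/a). -/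
/-- **Charging-clock bound.**  Let `0 < c`, `0 < a ≤ b`, `T ≥ 0`, and let
`x : [0,T] → ℝ` be nondecreasing and differentiable with `x 0 ≥ a` and `x T ≤ b`.
If `S ⊆ [0,T]` is a measurable set on which `x` grows at instantaneous rate at least
`x t / c`, then the Lebesgue measure of `S` is at most `c · ln (b / a)`. -/
theorem charging_clock_bound (c : ℝ) (hc : 0 < c) (a b : ℝ) (ha : 0 < a) (hab : a ≤ b)
    (T : ℝ) (hT : 0 ≤ T) (x : ℝ → ℝ)
    (hmono : MonotoneOn x (Set.Icc 0 T))
    (hdiff : ∀ t ∈ Set.Icc 0 T, DifferentiableAt ℝ x t)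
    (hx0 : a ≤ x 0) (hxT : x T ≤ b)
    (S : Set ℝ) (hS : S ⊆ Set.Icc 0 T) (hSm : MeasurableSet S)
    (hrate : ∀ t ∈ S, x t / c ≤ deriv x t) :
    MeasureTheory.volume S ≤ ENNReal.ofReal (c * Real.log (b / a)) := by
  have hxa : ∀ t ∈ Set.Icc 0 T, a ≤ x t := fun t ht =>
    hx0.trans (hmono ⟨le_rfl, hT⟩ ht ht.1)
  have hxb : ∀ t ∈ Set.Icc 0 T, x t ≤ b := fun t ht =>
    (hmono ht ⟨hT, le_rfl⟩ ht.2).trans hxT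
  have hder : ∀ t ∈ S, HasDerivWithinAt (fun t => c * Real.log (x t))
      (c * (deriv x t / x t)) S t := fun t ht =>
    (((hdiff t (hS ht)).hasDerivAt.log
      (ha.trans_le (hxa t (hS ht))).ne').const_mul c).hasDerivWithinAt
  have hm : MonotoneOn (fun t => c * Real.log (x t)) S := fun s hs t ht hst =>
    mul_le_mul_of_nonneg_left
      (Real.log_le_log (ha.trans_le (hxa s (hS hs))) (hmono (hS hs) (hS ht) hst)) hc.le
  have key := MeasureTheory.lintegral_deriv_eq_volume_image_of_monotoneOn hSm hder hm
  calc MeasureTheory.volume S = ∫⁻ _ in S, 1 := by simp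
    _ ≤ ∫⁻ t in S, ENNReal.ofReal (c * (deriv x t / x t)) := by
        refine MeasureTheory.setLIntegral_mono' hSm fun t ht => ?_
        have hp := ha.trans_le (hxa t (hS ht))
        have h := hrate t ht
        rw [ENNReal.one_le_ofReal, ← mul_div_assoc, le_div_iff₀ hp, one_mul]
        rwa [div_le_iff₀ hc, mul_comm] at h
    _ = MeasureTheory.volume ((fun t => c * Real.log (x t)) '' S) := key
    _ ≤ MeasureTheory.volume (Set.Icc (c * Real.log a) (c * Real.log b)) := by
        refine MeasureTheory.measure_mono ?_
        rintro _ ⟨t, ht, rfl⟩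
        have hp := ha.trans_le (hxa t (hS ht))
        exact ⟨mul_le_mul_of_nonneg_left (Real.log_le_log ha (hxa t (hS ht))) hc.le,
          mul_le_mul_of_nonneg_left (Real.log_le_log hp (hxb t (hS ht))) hc.le⟩
    _ = ENNReal.ofReal (c * Real.log (b / a)) := by
        rw [Real.volume_Icc, Real.log_div (ha.trans_le hab).ne' ha.ne', mul_sub]
end

section
/- Let n ≥ 2 and let (x, f, z) be a feasible solution of the composite LP (MC-BaB LP) of objective value Φ, on an instance with n vertices. For each level-0 root copy r, draw τ_r independently and uniformly at random from the interval [1/n^5, 1/(6 ln n)], and define the scaled solution x̃^r_e = min(1, x^r_e/τ_r), f̃^r_{(e,s_i)} = min(1, f^r_{(e,s_i)}/τ_r), f̃^r_{(e,t_i)} = min(1, f^r_{(e,t_i)}/τ_r), and z̃_{ir} = 1 if z_{ir} ≥ τ_r and z̃_{ir} = 0 otherwise. Then there is an absolute constant C such that: (i) deterministically, for every root r and every pair i with z̃_{ir} = 1, the edge capacities {f̃^r_{(e,s_i)}}_e admit a flow of value 1 from the copy of s_i to r in G^up, the capacities {f̃^r_{(e,t_i)}}_e admit a flow of value 1 from r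 to the copy of t_i in G^down, and f̃^r_{(e,s_i)} ≤ x̃^r_e and f̃^r_{(e,t_i)} ≤ x̃^r_e for all e; (ii) the expected value of Σ_r Σ_e c_e x̃^r_e + Σ_i Σ_r Σ_e ℓ_e (f̃^r_{(e,s_i)} + f̃^r_{(e,t_i)}) is at most C·(ln n)²·Φ; and (iii) for every pair i, with probability at least 1 − 1/n³ there exists a root r with z̃_{ir} = 1. -/
namespace BaB

open MeasureTheory

/-- The uniform probability measure on the interval `[l, u]`. -/
noncomputable def unifIcc (l u : ℝ) : Measure ℝ :=
  (ENNReal.ofReal (u - l))⁻¹ • (volume.restrict (Set.Icc l u))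

/-- Independent uniform thresholds `τ_r ∈ [l, u]`, one for each root `r`. -/
noncomputable def prodUnif (V : Type) [Fintype V] (l u : ℝ) : Measure (V → ℝ) :=
  Measure.pi fun _ => unifIcc l u

/-- Levelled flow: each edge carries at most the flow value. -/
lemma flow_edge_le {W : Type} [Fintype W] [DecidableEq W] {E : Set (W × W)} {g : W × W → ℝ}
    {s r : W} {v : ℝ} (hg : IsFlow E g s r v) (lev : W → ℕ) (h : ℕ)
    (hE : ∀ a b, (a, b) ∈ E → lev b = lev a + 1) (hs : lev s = 0) (hr : lev r = h)
    (hle : ∀ a, lev a ≤ h) (hv : 0 ≤ v) (e : W × W) : g e ≤ v := by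
  obtain ⟨h0, hsupp, hcons, hval⟩ := hg
  have hz : ∀ a b, lev b ≠ lev a + 1 → g (a, b) = 0 := fun a b hab =>
    hsupp _ (fun hmem => hab (hE a b hmem))
  have key : ∀ m, m < h → ∑ u ∈ Finset.univ.filter (fun u => lev u = m), ∑ w, g (u, w) = v := by
    intro m
    induction m with
    | zero =>
      intro hm
      have hin : ∀ u, lev u = 0 → ∑ w, g (w, u) = 0 := by
        intro u hu
        exact Finset.sum_eq_zero (fun w _ => hz _ _ (by omega))
      rw [Finset.sum_eq_single s]
      · have := hin s hs
        linarith
      · intro b hb hbs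
        have hb' : lev b = 0 := by simpa using hb
        rw [← hcons b hbs (by rintro rfl; omega)]
        exact hin b hb'
      · intro hns
        simp [hs] at hns
    | succ m ih =>
      intro hm
      rw [← ih (by omega)]
      have h1 : ∑ u ∈ Finset.univ.filter (fun u => lev u = m + 1), ∑ w, g (u, w)
          = ∑ u ∈ Finset.univ.filter (fun u => lev u = m + 1), ∑ w, g (w, u) := by
        refine Finset.sum_congr rfl (fun u hu => ?_)
        have hu' : lev u = m + 1 := by simpa using hu
        exact (hcons u (by rintro rfl; omega) (by rintro rfl; omega)).symm
      rw [h1, Finset.sum_comm, Finset.sum_filter]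
      refine Finset.sum_congr rfl (fun w _ => ?_)
      split_ifs with hw
      · rw [Finset.sum_filter]
        refine Finset.sum_congr rfl (fun u _ => ?_)
        split_ifs with hu
        · rfl
        · exact (hz _ _ (by omega)).symm
      · refine Finset.sum_eq_zero (fun u hu => hz _ _ ?_)
        have hu' : lev u = m + 1 := by simpa using hu
        omega
  obtain ⟨a, b⟩ := e
  by_cases hab : (a, b) ∈ E
  · have hl := hE a b hab
    have hb := hle b
    rw [← key (lev a) (by omega)]
    calc g (a, b) ≤ ∑ w, g (a, w) :=
          Finset.single_le_sum (f := fun w => g (a, w)) (fun w _ => h0 _) (Finset.mem_univ b)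
      _ ≤ _ := Finset.single_le_sum (f := fun u => ∑ w, g (u, w))
          (fun u _ => Finset.sum_nonneg (fun w _ => h0 _)) (by simp)
  · rw [hsupp _ hab]; exact hv

lemma flow_scale {W : Type} [Fintype W] {E : Set (W × W)} {g : W × W → ℝ}
    {s r : W} {v : ℝ} (hg : IsFlow E g s r v) (hv : 0 < v) :
    IsFlow E (fun e => g e / v) s r 1 := by
  obtain ⟨h0, hsupp, hcons, hval⟩ := hg
  refine ⟨fun e => div_nonneg (h0 e) hv.le, fun e he => by simp [hsupp e he], ?_, ?_⟩
  · intro u hu hu'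
    simp only [← Finset.sum_div]
    rw [hcons u hu hu']
  · simp only [← Finset.sum_div]
    rw [← sub_div, hval, div_self hv.ne']

/-- Scaled unit flow below the scaled capacities. -/
lemma flow_round {W : Type} [Fintype W] [DecidableEq W] {E : Set (W × W)} {g : W × W → ℝ}
    {s r : W} {v t : ℝ} (hg : IsFlow E g s r v) (lev : W → ℕ) (h : ℕ)
    (hE : ∀ a b, (a, b) ∈ E → lev b = lev a + 1) (hs : lev s = 0) (hr : lev r = h)
    (hle : ∀ a, lev a ≤ h) (ht : 0 < t) (htv : t ≤ v) :
    ∃ g', IsFlow E g' s r 1 ∧ ∀ e, g' e ≤ min 1 (g e / t) := by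
  have hv : 0 < v := ht.trans_le htv
  refine ⟨_, flow_scale hg hv, fun e => le_min ?_ ?_⟩
  · rw [div_le_one hv]
    exact flow_edge_le hg lev h hE hs hr hle hv.le e
  · exact div_le_div_of_nonneg_left (hg.1 e) ht htv

lemma unif_prob {l u : ℝ} (hlu : l < u) : IsProbabilityMeasure (unifIcc l u) := by
  constructor
  simp only [unifIcc, Measure.smul_apply, Measure.restrict_apply_univ, Real.volume_Icc, smul_eq_mul]
  exact ENNReal.inv_mul_cancel (by simpa using hlu) ENNReal.ofReal_ne_top

lemma unif_Ioi {l u : ℝ} (hlu : l < u) (z : ℝ) :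
    unifIcc l u (Set.Ioi z) ≤ ENNReal.ofReal (Real.exp (-((z - l) / (u - l)))) := by
  have hd : 0 < u - l := sub_pos.2 hlu
  have := unif_prob hlu
  by_cases hz : z < l
  · refine prob_le_one.trans ?_
    rw [ENNReal.one_le_ofReal]
    apply Real.one_le_exp
    rw [neg_nonneg]
    exact div_nonpos_of_nonpos_of_nonneg (by linarith) hd.le
  · have hsub : Set.Ioi z ∩ Set.Icc l u ⊆ Set.Ioc z u := fun x hx => ⟨hx.1, hx.2.2⟩
    have : unifIcc l u (Set.Ioi z) ≤ (ENNReal.ofReal (u - l))⁻¹ * ENNReal.ofReal (u - z) := by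
      simp only [unifIcc, Measure.smul_apply, smul_eq_mul]
      rw [Measure.restrict_apply measurableSet_Ioi]
      gcongr
      exact (measure_mono hsub).trans Real.volume_Ioc.le
    refine this.trans ?_
    rw [← ENNReal.ofReal_inv_of_pos hd, ← ENNReal.ofReal_mul (by positivity)]
    apply ENNReal.ofReal_le_ofReal
    have h1 := Real.add_one_le_exp (-((z - l) / (u - l)))
    have h2 : (u - l)⁻¹ * (u - z) = -((z - l) / (u - l)) + 1 := by field_simp; ring
    linarith

lemma unif_inv {l u : ℝ} (hl : 0 < l) (hlu : l < u) :
    Integrable (fun x : ℝ => x⁻¹) (unifIcc l u) ∧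
      ∫ x, x⁻¹ ∂(unifIcc l u) = (u - l)⁻¹ * Real.log (u / l) := by
  have hd : 0 < u - l := sub_pos.2 hlu
  have hint : IntegrableOn (fun x : ℝ => x⁻¹) (Set.Icc l u) volume := by
    apply ContinuousOn.integrableOn_Icc
    exact continuousOn_inv₀.mono (fun x hx => (hl.trans_le hx.1).ne')
  constructor
  · exact Integrable.smul_measure hint (ENNReal.inv_ne_top.2 (by simpa using hlu))
  · rw [unifIcc, integral_smul_measure, integral_Icc_eq_integral_Ioc,
      ← intervalIntegral.integral_of_le hlu.le, integral_inv_of_pos hl (hl.trans hlu),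
      ENNReal.toReal_inv, ENNReal.toReal_ofReal hd.le, smul_eq_mul]

lemma unif_ae (l u : ℝ) : ∀ᵐ x ∂(unifIcc l u), x ∈ Set.Icc l u :=
  Measure.ae_smul_measure (ae_restrict_mem measurableSet_Icc) _

/-- The numerical facts about the interval. -/
lemma num_facts {n : ℕ} (hn : 2 ≤ n) :
    0 < Real.log n ∧ 0 < 1 / (n : ℝ) ^ 5 ∧ 1 / (n : ℝ) ^ 5 < 1 / (6 * Real.log n) ∧
    (1 / (6 * Real.log n) - 1 / (n : ℝ) ^ 5)⁻¹ *
      Real.log (1 / (6 * Real.log n) / (1 / (n : ℝ) ^ 5)) ≤ 60 * Real.log n ^ 2 ∧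
    3 * Real.log n ≤ (1 - n * (1 / (n : ℝ) ^ 5)) / (1 / (6 * Real.log n) - 1 / (n : ℝ) ^ 5) := by
  have hn' : (2 : ℝ) ≤ n := by exact_mod_cast hn
  have hL : 0 < Real.log n := Real.log_pos (by linarith)
  have hL1 : 1 ≤ 6 * Real.log n := by
    have := Real.log_two_gt_d9
    have := Real.log_le_log (by norm_num) hn'
    linarith
  have hLn : Real.log n ≤ n := by
    have := Real.log_le_sub_one_of_pos (show (0:ℝ) < n by linarith)
    linarith
  have hn4 : (16 : ℝ) ≤ n ^ 4 := by
    have := pow_le_pow_left₀ (by norm_num) hn' 4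
    linarith
  have hn5 : 16 * (n : ℝ) ≤ n ^ 5 := by
    have : (n : ℝ) ^ 5 = n ^ 4 * n := by ring
    rw [this]; gcongr
  have hl : 0 < 1 / (n : ℝ) ^ 5 := by positivity
  have hl2 : 1 / (n : ℝ) ^ 5 ≤ 1 / (12 * Real.log n) := by
    apply one_div_le_one_div_of_le (by positivity)
    linarith
  have hsplit : 1 / (6 * Real.log n) = 1 / (12 * Real.log n) + 1 / (12 * Real.log n) := by
    field_simp; norm_num
  have h12 : 0 < 1 / (12 * Real.log n) := by positivity
  have hdl : 1 / (12 * Real.log n) ≤ 1 / (6 * Real.log n) - 1 / (n : ℝ) ^ 5 := by linarith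
  have hd : 0 < 1 / (6 * Real.log n) - 1 / (n : ℝ) ^ 5 := by linarith
  refine ⟨hL, hl, by linarith, ?_, ?_⟩
  · have h1 : (1 / (6 * Real.log n) - 1 / (n : ℝ) ^ 5)⁻¹ ≤ 12 * Real.log n := by
      rw [inv_le_comm₀ hd (by positivity), ← one_div]
      exact hdl
    have h2 : Real.log (1 / (6 * Real.log n) / (1 / (n : ℝ) ^ 5)) ≤ 5 * Real.log n := by
      have : (5 : ℝ) * Real.log n = Real.log ((n : ℝ) ^ 5) := by
        rw [Real.log_pow]; norm_num
      rw [this]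
      apply Real.log_le_log (by positivity)
      rw [div_le_iff₀ hl, mul_one_div_cancel (by positivity)]
      rw [div_le_one (by positivity)]
      exact hL1
    calc _ ≤ (1 / (6 * Real.log n) - 1 / (n : ℝ) ^ 5)⁻¹ * (5 * Real.log n) := by gcongr
      _ ≤ (12 * Real.log n) * (5 * Real.log n) := by gcongr
      _ = _ := by ring
  · rw [le_div_iff₀ hd]
    have h1 : (n : ℝ) * (1 / (n : ℝ) ^ 5) = 1 / (n : ℝ) ^ 4 := by field_simp
    have h2 : 1 / (n : ℝ) ^ 4 ≤ 1 / 16 := one_div_le_one_div_of_le (by norm_num) hn4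
    have h3 : 3 * Real.log n * (1 / (6 * Real.log n) - 1 / (n : ℝ) ^ 5) ≤
        3 * Real.log n * (1 / (6 * Real.log n)) := by
      gcongr; linarith
    have h4 : 3 * Real.log n * (1 / (6 * Real.log n)) = 1 / 2 := by field_simp; norm_num
    rw [h1]; linarith

lemma prodUnif_exists {V : Type} [Fintype V] {n : ℕ} (hcard : n = Fintype.card V) (hn : 2 ≤ n)
    (z : V → ℝ) (hz : 1 ≤ ∑ rt, z rt) :
    ENNReal.ofReal (1 - 1 / (n : ℝ) ^ 3)
      ≤ prodUnif V (1 / (n : ℝ) ^ 5) (1 / (6 * Real.log n)) {τ | ∃ rt, τ rt ≤ z rt} := by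
  obtain ⟨hL, hl, hlu, -, hexp⟩ := num_facts hn
  set l := 1 / (n : ℝ) ^ 5
  set u := 1 / (6 * Real.log n)
  have := unif_prob hlu
  have : IsProbabilityMeasure (prodUnif V l u) := by unfold prodUnif; infer_instance
  have hset : {τ : V → ℝ | ∃ rt, τ rt ≤ z rt} = (Set.univ.pi fun rt => Set.Ioi (z rt))ᶜ := by
    ext τ; simp
  have hd : 0 < u - l := sub_pos.2 hlu
  have hm : prodUnif V l u (Set.univ.pi fun rt => Set.Ioi (z rt)) ≤
      ENNReal.ofReal (1 / (n : ℝ) ^ 3) := by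
    rw [prodUnif, Measure.pi_pi]
    calc _ ≤ ∏ rt, ENNReal.ofReal (Real.exp (-((z rt - l) / (u - l)))) :=
          Finset.prod_le_prod' (fun rt _ => unif_Ioi hlu (z rt))
      _ = ENNReal.ofReal (Real.exp (∑ rt, -((z rt - l) / (u - l)))) := by
          rw [Real.exp_sum, ENNReal.ofReal_prod_of_nonneg (fun _ _ => (Real.exp_pos _).le)]
      _ ≤ _ := by
          apply ENNReal.ofReal_le_ofReal
          have hpow : 1 / (n : ℝ) ^ 3 = Real.exp (-(3 * Real.log n)) := by
            have hn0 : (0 : ℝ) < n := by exact_mod_cast (by omega : 0 < n)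
            rw [Real.exp_neg, one_div]
            congr 1
            rw [show (3 : ℝ) * Real.log n = Real.log ((n : ℝ) ^ 3) by
              rw [Real.log_pow]; norm_num]
            rw [Real.exp_log (by positivity)]
          rw [hpow]
          apply Real.exp_le_exp.2
          rw [Finset.sum_neg_distrib, neg_le_neg_iff, ← Finset.sum_div, Finset.sum_sub_distrib]
          refine hexp.trans ?_
          rw [Finset.sum_const, Finset.card_univ, ← hcard, nsmul_eq_mul]
          gcongr
  have hms : MeasurableSet (Set.univ.pi fun rt : V => Set.Ioi (z rt)) :=
    MeasurableSet.univ_pi (fun _ => measurableSet_Ioi)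
  rw [hset, prob_compl_eq_one_sub hms, ENNReal.ofReal_sub _ (by positivity), ENNReal.ofReal_one]
  gcongr

lemma prodUnif_expect {V : Type} [Fintype V] {n : ℕ} (hn : 2 ≤ n)
    (F : (V → ℝ) → ℝ) (A : V → ℝ) (hA : ∀ rt, 0 ≤ A rt)
    (hF : ∀ τ : V → ℝ, (∀ rt, 0 < τ rt) → 0 ≤ F τ ∧ F τ ≤ ∑ rt, A rt * (τ rt)⁻¹) :
    ∫ τ, F τ ∂(prodUnif V (1 / (n : ℝ) ^ 5) (1 / (6 * Real.log n)))
      ≤ 60 * Real.log n ^ 2 * ∑ rt, A rt := by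
  obtain ⟨hL, hl, hlu, hE, -⟩ := num_facts hn
  set l := 1 / (n : ℝ) ^ 5
  set u := 1 / (6 * Real.log n)
  have := unif_prob hlu
  obtain ⟨hi1, hi2⟩ := unif_inv hl hlu
  have hmp : ∀ rt : V, MeasurePreserving (Function.eval rt) (prodUnif V l u) (unifIcc l u) :=
    fun rt => measurePreserving_eval (fun _ : V => unifIcc l u) rt
  have hae : ∀ᵐ τ ∂(prodUnif V l u), ∀ rt, 0 < τ rt := by
    rw [ae_all_iff]
    intro rt
    have := (hmp rt).quasiMeasurePreserving.ae (unif_ae l u)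
    filter_upwards [this] with τ hτ
    exact hl.trans_le hτ.1
  have hint : ∀ rt : V, Integrable (fun τ : V → ℝ => (τ rt)⁻¹) (prodUnif V l u) :=
    fun rt => (hmp rt).integrable_comp_of_integrable hi1
  have hval : ∀ rt : V, ∫ τ, (τ rt)⁻¹ ∂(prodUnif V l u) = (u - l)⁻¹ * Real.log (u / l) := by
    intro rt
    rw [← hi2, ← (hmp rt).map_eq, integral_map (hmp rt).measurable.aemeasurable
      (by fun_prop)]
  calc ∫ τ, F τ ∂(prodUnif V l u) ≤ ∫ τ, ∑ rt, A rt * (τ rt)⁻¹ ∂(prodUnif V l u) := by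
        apply integral_mono_of_nonneg
        · filter_upwards [hae] with τ hτ using (hF τ hτ).1
        · exact integrable_finsetSum _ (fun rt _ => (hint rt).const_mul _)
        · filter_upwards [hae] with τ hτ using (hF τ hτ).2
    _ = ∑ rt, A rt * ((u - l)⁻¹ * Real.log (u / l)) := by
        rw [integral_finsetSum _ (fun rt _ => (hint rt).const_mul _)]
        refine Finset.sum_congr rfl (fun rt _ => ?_)
        rw [integral_const_mul, hval]
    _ ≤ _ := by
        rw [← Finset.sum_mul, mul_comm]
        exact mul_le_mul_of_nonneg_right hE (Finset.sum_nonneg (fun rt _ => hA rt))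

/-- **Partial online rounding of the composite LP.**  Let `(z, xu, xd, fs, ft)` be a
feasible solution of the composite MC-BaB LP of objective value `Φ`, on an instance
with `n ≥ 2` vertices.  Drawing independent uniform thresholds
`τ_r ∈ [1/n^5, 1/(6 ln n)]` and scaling by `min 1 (·/τ_r)`:
(i) deterministically, whenever `z i r ≥ τ r` the scaled flow capacities admit unit
flows (to `r` in `G^up` and from `r` in `G^down`) and scaled flows stay below scaled
capacities; (ii) the expected scaled objective is at most `C·(ln n)²·Φ`; and
(iii) each pair has some root with `z i r ≥ τ r` with probability at least
`1 - 1/n³`. -/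
theorem partial_online_rounding :
    ∃ C : ℝ, 0 < C ∧
      ∀ (V : Type) [Fintype V] [DecidableEq V],
        ∀ (E : Set (V × V)) (X : List (V × V)) (n h : ℕ),
        n = Fintype.card V → 2 ≤ n →
        ∀ (c' ℓ' c'' ℓ'' : (Fin (h + 1) × V) × (Fin (h + 1) × V) → ℝ),
        (∀ e, 0 ≤ c' e) → (∀ e, 0 ≤ ℓ' e) → (∀ e, 0 ≤ c'' e) → (∀ e, 0 ≤ ℓ'' e) →
        ∀ (z : Fin X.length → V → ℝ)
          (xu xd : V → (Fin (h + 1) × V) × (Fin (h + 1) × V) → ℝ)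
          (fs ft : Fin X.length → V → (Fin (h + 1) × V) × (Fin (h + 1) × V) → ℝ)
          (Φ : ℝ),
        (∀ i rt, 0 ≤ z i rt) → (∀ i, 1 ≤ ∑ rt : V, z i rt) →
        (∀ rt e, 0 ≤ xu rt e) → (∀ rt e, 0 ≤ xd rt e) →
        (∀ i rt, IsFlow (upEdges E h) (fs i rt)
            (Fin.last h, (X.get i).1) ((0 : Fin (h + 1)), rt) (z i rt)) →
        (∀ i rt, IsFlow (downEdges E h) (ft i rt)
            ((0 : Fin (h + 1)), rt) (Fin.last h, (X.get i).2) (z i rt)) →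
        (∀ i rt e, fs i rt e ≤ xu rt e) → (∀ i rt e, ft i rt e ≤ xd rt e) →
        Φ = (∑ rt : V, ∑ e : (Fin (h + 1) × V) × (Fin (h + 1) × V),
              (c' e * xu rt e + c'' e * xd rt e))
            + ∑ i, ∑ rt : V, ∑ e : (Fin (h + 1) × V) × (Fin (h + 1) × V),
                (ℓ' e * fs i rt e + ℓ'' e * ft i rt e) →
        -- (i) deterministic feasibility of the scaled solution
        ((∀ τ : V → ℝ,
          (∀ rt, τ rt ∈ Set.Icc (1 / (n : ℝ) ^ 5) (1 / (6 * Real.log n))) →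
          ∀ (i : Fin X.length) (rt : V), τ rt ≤ z i rt →
            (∃ g, IsFlow (upEdges E h) g (Fin.last h, (X.get i).1) ((0 : Fin (h + 1)), rt) 1 ∧
              ∀ e, g e ≤ min 1 (fs i rt e / τ rt)) ∧
            (∃ g, IsFlow (downEdges E h) g ((0 : Fin (h + 1)), rt) (Fin.last h, (X.get i).2) 1 ∧
              ∀ e, g e ≤ min 1 (ft i rt e / τ rt)) ∧
            (∀ e, min 1 (fs i rt e / τ rt) ≤ min 1 (xu rt e / τ rt)) ∧
            (∀ e, min 1 (ft i rt e / τ rt) ≤ min 1 (xd rt e / τ rt))) ∧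
        -- (ii) expected objective value of the scaled solution
        (∫ τ, ((∑ rt : V, ∑ e : (Fin (h + 1) × V) × (Fin (h + 1) × V),
                  (c' e * min 1 (xu rt e / τ rt) + c'' e * min 1 (xd rt e / τ rt)))
                + ∑ i, ∑ rt : V, ∑ e : (Fin (h + 1) × V) × (Fin (h + 1) × V),
                    (ℓ' e * min 1 (fs i rt e / τ rt) + ℓ'' e * min 1 (ft i rt e / τ rt)))
            ∂(prodUnif V (1 / (n : ℝ) ^ 5) (1 / (6 * Real.log n)))
          ≤ C * Real.log n ^ 2 * Φ) ∧
        -- (iii) every pair is assigned to some root with high probability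
        (∀ i : Fin X.length,
          ENNReal.ofReal (1 - 1 / (n : ℝ) ^ 3)
            ≤ prodUnif V (1 / (n : ℝ) ^ 5) (1 / (6 * Real.log n)) {τ | ∃ rt, τ rt ≤ z i rt})) := by
  refine ⟨60, by norm_num, ?_⟩
  intro V _ _ E X n h hcard hn c' ℓ' c'' ℓ'' hc' hl' hc'' hl'' z xu xd fs ft Φ hz hzs hxu hxd
    hfs hft hfsx hftx hΦ
  obtain ⟨-, hl, -, -, -⟩ := num_facts hn
  refine ⟨?_, ?_, fun i => prodUnif_exists hcard hn (z i) (hzs i)⟩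
  · intro τ hτ i rt hle
    have ht : 0 < τ rt := hl.trans_le (hτ rt).1
    refine ⟨?_, ?_, ?_, ?_⟩
    · refine flow_round (hfs i rt) (fun a => h - (a.1 : ℕ)) h ?_ (by simp) (by simp)
        (fun a => Nat.sub_le _ _) ht hle
      rintro a b ⟨p, q, v, w, heq, hpq, -⟩
      obtain ⟨rfl, rfl⟩ := Prod.mk.inj heq
      have := p.2
      simp only
      omega
    · refine flow_round (hft i rt) (fun a => (a.1 : ℕ)) h ?_ (by simp) (by simp)
        (fun a => Nat.lt_succ_iff.1 a.1.2) ht hle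
      rintro a b ⟨p, q, v, w, heq, hpq, -⟩
      obtain ⟨rfl, rfl⟩ := Prod.mk.inj heq
      simp only
      omega
    · intro e
      exact min_le_min_left _ (div_le_div_of_nonneg_right (hfsx i rt e) ht.le)
    · intro e
      exact min_le_min_left _ (div_le_div_of_nonneg_right (hftx i rt e) ht.le)
  · have hfs0 := fun i rt => (hfs i rt).1
    have hft0 := fun i rt => (hft i rt).1
    have hΦ' : Φ = ∑ rt : V, ((∑ e, (c' e * xu rt e + c'' e * xd rt e))
        + ∑ i, ∑ e, (ℓ' e * fs i rt e + ℓ'' e * ft i rt e)) := by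
      rw [hΦ, Finset.sum_add_distrib]
      congr 1
      exact Finset.sum_comm
    rw [hΦ']
    apply prodUnif_expect hn
    · intro rt
      refine add_nonneg (Finset.sum_nonneg fun e _ => ?_)
        (Finset.sum_nonneg fun i _ => Finset.sum_nonneg fun e _ => ?_)
      · exact add_nonneg (mul_nonneg (hc' e) (hxu rt e)) (mul_nonneg (hc'' e) (hxd rt e))
      · exact add_nonneg (mul_nonneg (hl' e) (hfs0 i rt e)) (mul_nonneg (hl'' e) (hft0 i rt e))
    · intro τ hτ
      have hm : ∀ (rt : V) (a x : ℝ), 0 ≤ a → 0 ≤ x → 0 ≤ a * min 1 (x / τ rt) :=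
        fun rt a x ha hx => mul_nonneg ha (le_min zero_le_one (div_nonneg hx (hτ rt).le))
      have hb : ∀ (rt : V) (a x b y : ℝ), 0 ≤ a → 0 ≤ b →
          a * min 1 (x / τ rt) + b * min 1 (y / τ rt) ≤ (a * x + b * y) * (τ rt)⁻¹ := by
        intro rt a x b y ha hb
        have h1 := mul_le_mul_of_nonneg_left (min_le_right 1 (x / τ rt)) ha
        have h2 := mul_le_mul_of_nonneg_left (min_le_right 1 (y / τ rt)) hb
        rw [add_mul, mul_assoc, mul_assoc, ← div_eq_mul_inv, ← div_eq_mul_inv]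
        exact add_le_add h1 h2
      constructor
      · refine add_nonneg (Finset.sum_nonneg fun rt _ => Finset.sum_nonneg fun e _ => ?_)
          (Finset.sum_nonneg fun i _ => Finset.sum_nonneg fun rt _ =>
            Finset.sum_nonneg fun e _ => ?_)
        · exact add_nonneg (hm _ _ _ (hc' e) (hxu rt e)) (hm _ _ _ (hc'' e) (hxd rt e))
        · exact add_nonneg (hm _ _ _ (hl' e) (hfs0 i rt e)) (hm _ _ _ (hl'' e) (hft0 i rt e))
      · rw [Finset.sum_comm (s := (Finset.univ : Finset (Fin X.length))),
          ← Finset.sum_add_distrib]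
        refine Finset.sum_le_sum fun rt _ => ?_
        rw [add_mul, Finset.sum_mul, Finset.sum_mul]
        refine add_le_add (Finset.sum_le_sum fun e _ => hb _ _ _ _ _ (hc' e) (hc'' e))
          (Finset.sum_le_sum fun i _ => ?_)
        rw [Finset.sum_mul]
        exact Finset.sum_le_sum fun e _ => hb _ _ _ _ _ (hl' e) (hl'' e)

end BaB
end

section
/- Let G be a finite directed graph, let s and r be vertices, and let {f_e}_{e∈E} be a flow of value z > 0 from s to r. Let 0 < τ ≤ z. Then for every set Q of edges such that every directed path from s to r uses at least one edge of Q, one has Σ_{e∈Q} min(1, f_e/τ) ≥ 1. Consequently, by the max-flow min-cut theorem, the edge capacities u_e := min(1, f_e/τ) admit a flow of value at least 1 from s to r. -/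
namespace BaB

/-- Net outflow of `g` at `v`. -/
def net {W : Type} [Fintype W] (g : W × W → ℝ) (v : W) : ℝ :=
  (∑ w : W, g (v, w)) - ∑ w : W, g (w, v)

theorem net_add_smul {W : Type} [Fintype W] (g d : W × W → ℝ) (c : ℝ) (v : W) :
    net (fun e => g e + c * d e) v = net g v + c * net d v := by
  simp only [net, Finset.sum_add_distrib, ← Finset.mul_sum]
  ring

theorem net_single {W : Type} [Fintype W] [DecidableEq W] (a b v : W) :
    net (fun e => if e = (a, b) then (1 : ℝ) else 0) v
      = (if v = a then 1 else 0) - (if v = b then 1 else 0) := by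
  unfold net
  congr 1
  · by_cases h : v = a <;> simp [Prod.ext_iff, h]
  · by_cases h : v = b <;> simp [Prod.ext_iff, h]

theorem net_sum {W : Type} [Fintype W] [DecidableEq W] (g : W × W → ℝ) (S : Finset W) :
    ∑ v ∈ S, net g v = (∑ e ∈ S ×ˢ Sᶜ, g e) - ∑ e ∈ Sᶜ ×ˢ S, g e := by
  have h1 : ∑ v ∈ S, ∑ w, g (v, w) = (∑ v ∈ S, ∑ w ∈ S, g (v, w)) + ∑ e ∈ S ×ˢ Sᶜ, g e := by
    rw [Finset.sum_product, ← Finset.sum_add_distrib]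
    exact Finset.sum_congr rfl fun v _ => (Finset.sum_add_sum_compl S _).symm
  have h2 : ∑ v ∈ S, ∑ w, g (w, v) = (∑ v ∈ S, ∑ w ∈ S, g (w, v)) + ∑ e ∈ Sᶜ ×ˢ S, g e := by
    rw [Finset.sum_product_right, ← Finset.sum_add_distrib]
    exact Finset.sum_congr rfl fun v _ => (Finset.sum_add_sum_compl S _).symm
  have h3 : (∑ v ∈ S, ∑ w ∈ S, g (v, w)) = ∑ v ∈ S, ∑ w ∈ S, g (w, v) := Finset.sum_comm
  simp only [net, Finset.sum_sub_distrib]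
  rw [h1, h2, h3]
  ring

theorem net_cut {W : Type} [Fintype W] [DecidableEq W] (g : W × W → ℝ) (s r : W)
    (hg : ∀ u, u ≠ s → u ≠ r → net g u = 0) (S : Finset W) (hs : s ∈ S) (hr : r ∉ S) :
    net g s = (∑ e ∈ S ×ˢ Sᶜ, g e) - ∑ e ∈ Sᶜ ×ˢ S, g e := by
  rw [← net_sum]
  symm
  apply Finset.sum_eq_single_of_mem s hs
  intro b hb hbs
  exact hg b hbs (by rintro rfl; exact hr hb)

/-- Any vertex-set cut has scaled capacity at least one. -/
theorem vertex_cut {W : Type} [Fintype W] [DecidableEq W] (f : W × W → ℝ) (s r : W) (z τ : ℝ)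
    (hf0 : ∀ e, 0 ≤ f e) (hf : ∀ u, u ≠ s → u ≠ r → net f u = 0) (hz : net f s = z)
    (hτ : 0 < τ) (hτz : τ ≤ z) (S : Finset W) (hs : s ∈ S) (hr : r ∉ S) :
    1 ≤ ∑ e ∈ S ×ˢ Sᶜ, min 1 (f e / τ) := by
  have hc := net_cut f s r hf S hs hr
  have h0 : 0 ≤ ∑ e ∈ Sᶜ ×ˢ S, f e := Finset.sum_nonneg fun e _ => hf0 e
  have hu0 : ∀ e, 0 ≤ min 1 (f e / τ) := fun e => le_min zero_le_one (div_nonneg (hf0 e) hτ.le)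
  by_cases h : ∃ e ∈ S ×ˢ Sᶜ, τ ≤ f e
  · obtain ⟨e, he, hle⟩ := h
    have h1 : min 1 (f e / τ) = 1 := min_eq_left ((one_le_div hτ).2 hle)
    refine h1.symm.le.trans ?_
    exact Finset.single_le_sum (f := fun e => min 1 (f e / τ)) (fun e _ => hu0 e) he
  · push Not at h
    have h1 : ∑ e ∈ S ×ˢ Sᶜ, min 1 (f e / τ) = (∑ e ∈ S ×ˢ Sᶜ, f e) / τ := by
      rw [Finset.sum_div]
      exact Finset.sum_congr rfl fun e he => min_eq_right ((div_le_one hτ).2 (h e he).le)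
    rw [h1, one_le_div hτ]
    linarith

theorem IsWalk.snoc {W : Type} {E : Set (W × W)} {b c : W} (h : (b, c) ∈ E) :
    ∀ {a : W} {p : List (W × W)}, IsWalk E a b p → IsWalk E a c (p ++ [(b, c)])
  | _, [], hp => by
    have : _ = b := hp
    subst this
    exact ⟨rfl, h, rfl⟩
  | _, _ :: _, hp => ⟨hp.1, hp.2.1, IsWalk.snoc h hp.2.2⟩

/-- Augmenting direction along residual reachability. -/
theorem exists_dir {W : Type} [Fintype W] [DecidableEq W] (g u : W × W → ℝ) (s t : W)
    (h : Relation.ReflTransGen (fun a b => g (a, b) < u (a, b) ∨ 0 < g (b, a)) s t) :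
    ∃ d : W × W → ℝ, (∀ v, net d v = (if v = s then 1 else 0) - (if v = t then 1 else 0)) ∧
      ∀ e, (0 < d e → g e < u e) ∧ (d e < 0 → 0 < g e) := by
  induction h with
  | refl => exact ⟨fun _ => 0, by simp [net], by simp⟩
  | @tail b c _ hbc ih =>
    obtain ⟨d, hd, hd'⟩ := ih
    rcases hbc with hbc | hbc
    · refine ⟨fun e => d e + 1 * (if e = (b, c) then 1 else 0), fun v => ?_, fun e => ?_⟩
      · rw [net_add_smul, net_single, hd]; ring
      · by_cases he : e = (b, c)
        · subst he
          refine ⟨fun _ => hbc, fun h => (hd' _).2 ?_⟩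
          simp at h
          linarith
        · simpa [he] using hd' e
    · refine ⟨fun e => d e + (-1) * (if e = (c, b) then 1 else 0), fun v => ?_, fun e => ?_⟩
      · rw [net_add_smul, net_single, hd]; ring
      · by_cases he : e = (c, b)
        · subst he
          refine ⟨fun h => (hd' _).1 ?_, fun _ => hbc⟩
          simp at h
          linarith
        · simpa [he] using hd' e

/-- Max-flow min-cut. -/
theorem max_flow {W : Type} [Fintype W] [DecidableEq W] (u : W × W → ℝ) (s r : W) (hsr : s ≠ r)
    (hu : ∀ e, 0 ≤ u e)
    (hcut : ∀ S : Finset W, s ∈ S → r ∉ S → 1 ≤ ∑ e ∈ S ×ˢ Sᶜ, u e) :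
    ∃ g : W × W → ℝ, (∀ e, 0 ≤ g e) ∧ (∀ e, g e ≤ u e) ∧
      (∀ v, v ≠ s → v ≠ r → net g v = 0) ∧ 1 ≤ net g s := by
  classical
  have hcont : ∀ v, Continuous fun g : W × W → ℝ => net g v := fun v => by
    unfold net; fun_prop
  let C : Set (W × W → ℝ) := {g | ∀ v, v ≠ s → v ≠ r → net g v = 0}
  have hC : IsClosed C := by
    have : C = ⋂ v, ⋂ (_ : v ≠ s), ⋂ (_ : v ≠ r), {g | net g v = 0} := by
      ext g; simp [C]
    rw [this]
    exact isClosed_iInter fun v => isClosed_iInter fun _ => isClosed_iInter fun _ =>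
      isClosed_eq (hcont v) continuous_const
  have hK : IsCompact (Set.Icc 0 u ∩ C) := isCompact_Icc.inter_right hC
  obtain ⟨g, ⟨⟨hg0, hgu⟩, hgC⟩, hmax⟩ := hK.exists_isMaxOn
    ⟨0, ⟨le_refl _, hu⟩, fun v _ _ => by simp [net]⟩ (hcont s).continuousOn
  refine ⟨g, hg0, hgu, hgC, ?_⟩
  let R : W → W → Prop := fun a b => g (a, b) < u (a, b) ∨ 0 < g (b, a)
  let S : Finset W := Finset.univ.filter fun v => Relation.ReflTransGen R s v
  have hsS : s ∈ S := by simp [S, Relation.ReflTransGen.refl]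
  by_cases hrS : r ∈ S
  · exfalso
    have hr : Relation.ReflTransGen R s r := by simpa [S] using hrS
    obtain ⟨d, hd, hd'⟩ := exists_dir g u s r hr
    have hev : ∀ᶠ ε in nhdsWithin (0 : ℝ) (Set.Ioi 0),
        ∀ e, 0 ≤ g e + ε * d e ∧ g e + ε * d e ≤ u e := by
      rw [Filter.eventually_all]
      intro e
      have hc : Filter.Tendsto (fun ε : ℝ => g e + ε * d e) (nhdsWithin 0 (Set.Ioi 0))
          (nhds (g e)) := by
        have : Continuous fun ε : ℝ => g e + ε * d e := by fun_prop
        have h := this.tendsto 0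
        simp only [zero_mul, add_zero] at h
        exact h.mono_left nhdsWithin_le_nhds
      have h0 : 0 ≤ g e := hg0 e
      have h1 : g e ≤ u e := hgu e
      rcases lt_trichotomy (d e) 0 with h | h | h
      · filter_upwards [hc.eventually_const_lt ((hd' e).2 h), self_mem_nhdsWithin] with ε h2 h3
        have h3 : 0 < ε := h3
        exact ⟨h2.le, by nlinarith⟩
      · exact Filter.Eventually.of_forall fun ε => by simp [h, h0, h1]
      · filter_upwards [hc.eventually_lt_const ((hd' e).1 h), self_mem_nhdsWithin] with ε h2 h3
        have h3 : 0 < ε := h3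
        exact ⟨by positivity, h2.le⟩
    obtain ⟨ε, hε, hε0⟩ := (hev.and self_mem_nhdsWithin).exists
    have hε0 : 0 < ε := hε0
    have hm : net (fun e => g e + ε * d e) s ≤ net g s := by
      apply hmax
      refine ⟨⟨fun e => (hε e).1, fun e => (hε e).2⟩, fun v hv hv' => ?_⟩
      rw [net_add_smul, hgC v hv hv', hd]
      simp [hv, hv']
    rw [net_add_smul, hd] at hm
    simp [hsr] at hm
    linarith
  · rw [net_cut g s r hgC S hsS hrS]
    have hnot : ∀ a ∈ S, ∀ b ∉ S, ¬ R a b := by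
      intro a ha b hb hab
      apply hb
      simp only [S, Finset.mem_filter, Finset.mem_univ, true_and] at ha ⊢
      exact ha.tail hab
    have h1 : ∑ e ∈ S ×ˢ Sᶜ, g e = ∑ e ∈ S ×ˢ Sᶜ, u e := by
      apply Finset.sum_congr rfl
      rintro ⟨a, b⟩ he
      rw [Finset.mem_product, Finset.mem_compl] at he
      have := hnot a he.1 b he.2
      simp only [R, not_or, not_lt] at this
      exact le_antisymm (hgu _) this.1
    have h2 : ∑ e ∈ Sᶜ ×ˢ S, g e = 0 := by
      apply Finset.sum_eq_zero
      rintro ⟨b, a⟩ he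
      rw [Finset.mem_product, Finset.mem_compl] at he
      have := hnot a he.2 b he.1
      simp only [R, not_or, not_lt] at this
      exact le_antisymm this.2 (hg0 _)
    rw [h1, h2, sub_zero]
    exact hcut S hsS hrS

/-- **Scaled flows cross every cut.**  If `f` is a flow of value `z > 0` from `s` to
`r` and `0 < τ ≤ z`, then every `s`–`r` cut `Q` has `Σ_{e ∈ Q} min(1, f_e/τ) ≥ 1`;
consequently (max-flow min-cut) the capacities `min(1, f_e/τ)` admit a flow of value
at least `1` from `s` to `r`. -/
theorem scaled_flow_crosses_cuts {V : Type} [Fintype V] [DecidableEq V]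
    (E : Set (V × V)) (s r : V) (f : V × V → ℝ) (z : ℝ) (hz : 0 < z)
    (hf : IsFlow E f s r z) (τ : ℝ) (hτ : 0 < τ) (hτz : τ ≤ z) :
    (∀ Q : Finset (V × V),
        (∀ w : List (V × V), IsWalk E s r w → ∃ e ∈ w, e ∈ Q) →
        1 ≤ ∑ e ∈ Q, min 1 (f e / τ)) ∧
    (∃ (v : ℝ) (g : V × V → ℝ), 1 ≤ v ∧ IsFlow E g s r v ∧
        ∀ e, g e ≤ min 1 (f e / τ)) := by
  classical
  obtain ⟨hf0, hfE, hfc, hfz⟩ := hf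
  have hfn : ∀ u, u ≠ s → u ≠ r → net f u = 0 := fun u h1 h2 => by
    unfold net; rw [hfc u h1 h2, sub_self]
  have hu0 : ∀ e, 0 ≤ min 1 (f e / τ) := fun e => le_min zero_le_one (div_nonneg (hf0 e) hτ.le)
  have hcut := vertex_cut f s r z τ hf0 hfn hfz hτ hτz
  constructor
  · intro Q hQ
    let S : Finset V := Finset.univ.filter fun v => ∃ p, IsWalk E s v p ∧ ∀ e ∈ p, e ∉ Q
    have hs : s ∈ S := by
      simp only [S, Finset.mem_filter, Finset.mem_univ, true_and]
      exact ⟨[], rfl, by simp⟩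
    have hr : r ∉ S := by
      simp only [S, Finset.mem_filter, Finset.mem_univ, true_and]
      rintro ⟨p, hp, hp'⟩
      obtain ⟨e, he, heQ⟩ := hQ p hp
      exact hp' e he heQ
    refine (hcut S hs hr).trans ?_
    have hz : ∀ e ∈ S ×ˢ Sᶜ, e ∉ Q → min 1 (f e / τ) = 0 := by
      rintro ⟨a, b⟩ he hq
      rw [Finset.mem_product, Finset.mem_compl] at he
      have hE : (a, b) ∉ E := by
        intro hE
        apply he.2
        have ha := he.1
        simp only [S, Finset.mem_filter, Finset.mem_univ, true_and] at ha ⊢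
        obtain ⟨p, hp, hp'⟩ := ha
        refine ⟨p ++ [(a, b)], hp.snoc hE, fun e hm => ?_⟩
        rcases List.mem_append.1 hm with hm | hm
        · exact hp' e hm
        · rw [List.mem_singleton.1 hm]; exact hq
      rw [hfE _ hE]; simp
    rw [← Finset.sum_filter_add_sum_filter_not (S ×ˢ Sᶜ) (fun e => e ∈ Q)]
    rw [Finset.sum_eq_zero (s := (S ×ˢ Sᶜ).filter (fun e => e ∉ Q))
      (fun e he => hz e (Finset.mem_filter.1 he).1 (Finset.mem_filter.1 he).2), add_zero]
    exact Finset.sum_le_sum_of_subset_of_nonneg (fun e he => (Finset.mem_filter.1 he).2)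
      (fun e _ _ => hu0 e)
  · have hsr : s ≠ r := by
      rintro rfl
      have h1 := net_sum f Finset.univ
      rw [Finset.sum_eq_single_of_mem s (Finset.mem_univ s) (fun b _ hb => hfn b hb hb)] at h1
      have h2 : net f s = z := hfz
      simp at h1
      linarith
    obtain ⟨g, hg0, hgu, hgc, hg1⟩ := max_flow (fun e => min 1 (f e / τ)) s r hsr hu0 hcut
    refine ⟨net g s, g, hg1, ⟨hg0, fun e he => ?_, fun v h1 h2 => ?_, rfl⟩, hgu⟩
    · have := hgu e
      simp only [hfE e he] at this
      exact le_antisymm (by simpa using this) (hg0 e)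
    · have := hgc v h1 h2
      unfold net at this
      linarith

end BaB
end

section
/- Let H be the graph constructed from a directed instance (G,X) with layered expansions of height h, and let J = (H,X). Then every feasible solution of J of objective value φ can be mapped to a feasible solution of (G,X) — indeed a junction-tree solution — of objective value at most φ. -/
namespace BaB

/-- Vertices of the graph `H`: nodes `(r, v_i :: ⋯ :: v_1)` of the in-arborescence
`T^up_r` (tuples recorded deepest-first), nodes of the out-arborescence `T^down_r`,
source vertices `s_i`, and sink vertices `t_i`. -/
abbrev HV (V : Type) (k : ℕ) : Type := (V × List V) ⊕ ((V × List V) ⊕ (Fin k ⊕ Fin k))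

instance {V : Type} [DecidableEq V] {k : ℕ} : DecidableEq (HV V k) :=
  inferInstanceAs (DecidableEq ((V × List V) ⊕ ((V × List V) ⊕ (Fin k ⊕ Fin k))))

def upNode {V : Type} {k : ℕ} (r : V) (l : List V) : HV V k := Sum.inl (r, l)

def downNode {V : Type} {k : ℕ} (r : V) (l : List V) : HV V k := Sum.inr (Sum.inl (r, l))

def srcNode {V : Type} {k : ℕ} (i : Fin k) : HV V k := Sum.inr (Sum.inr (Sum.inl i))

def snkNode {V : Type} {k : ℕ} (i : Fin k) : HV V k := Sum.inr (Sum.inr (Sum.inr i))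

/-- Arcs of the graph `H` built from `(G, X)` with layered expansions of height `h`:
tree arcs of each `T^up_r` (towards the root, present when the corresponding layered
edge of `G^up` exists, i.e. when `G` has a suitable directed walk), tree arcs of each
`T^down_r` (away from the root), a zero-cost bridge arc from the root of `T^up_r` to
the root of `T^down_r`, zero-cost arcs from each source `s_i` to the level-`h`
leaves `(r, v_1, …, v_h)` with `v_h = s_i`, and zero-cost arcs from the level-`h`
leaves with `v_h = t_i` to each sink `t_i`. -/
def Hedges {V : Type} (E : Set (V × V)) (h : ℕ) {k : ℕ} (src snk : Fin k → V) :
    Set (HV V k × HV V k) :=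
  {p | (∃ (r v : V) (l : List V), p = (upNode r (v :: l), upNode r l) ∧
          l.length + 1 ≤ h ∧ ∃ w, IsWalk E v (l.headD r) w) ∨
       (∃ (r v : V) (l : List V), p = (downNode r l, downNode r (v :: l)) ∧
          l.length + 1 ≤ h ∧ ∃ w, IsWalk E (l.headD r) v w) ∨
       (∃ r : V, p = (upNode r [], downNode r [])) ∨
       (∃ (i : Fin k) (r : V) (l : List V), p = (srcNode i, upNode r l) ∧
          l.length = h ∧ l.headD r = src i) ∨
       (∃ (i : Fin k) (r : V) (l : List V), p = (downNode r l, snkNode i) ∧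
          l.length = h ∧ l.headD r = snk i)}


/-- The costs and lengths of `H` are inherited from the layered expansions: tree arcs
carry the cost/length of the corresponding layered edge; bridge and terminal arcs
are free. -/
def HCostsValid {V : Type} (E : Set (V × V)) (h : ℕ) {k : ℕ} (_src _snk : Fin k → V)
    (c' ℓ' c'' ℓ'' : (Fin (h + 1) × V) × (Fin (h + 1) × V) → ℝ)
    (cH ℓH : (HV V k × HV V k) → ℝ) : Prop :=
  (∀ (r v : V) (l : List V) (hl : l.length + 1 ≤ h), (∃ w, IsWalk E v (l.headD r) w) →
      cH (upNode r (v :: l), upNode r l)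
          = c' ((⟨l.length + 1, by omega⟩, v), (⟨l.length, by omega⟩, l.headD r)) ∧
      ℓH (upNode r (v :: l), upNode r l)
          = ℓ' ((⟨l.length + 1, by omega⟩, v), (⟨l.length, by omega⟩, l.headD r))) ∧
  (∀ (r v : V) (l : List V) (hl : l.length + 1 ≤ h), (∃ w, IsWalk E (l.headD r) v w) →
      cH (downNode r l, downNode r (v :: l))
          = c'' ((⟨l.length, by omega⟩, l.headD r), (⟨l.length + 1, by omega⟩, v)) ∧
      ℓH (downNode r l, downNode r (v :: l))
          = ℓ'' ((⟨l.length, by omega⟩, l.headD r), (⟨l.length + 1, by omega⟩, v))) ∧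
  (∀ r : V, cH (upNode r [], downNode r []) = 0 ∧ ℓH (upNode r [], downNode r []) = 0) ∧
  (∀ (i : Fin k) (r : V) (l : List V),
      cH (srcNode i, upNode r l) = 0 ∧ ℓH (srcNode i, upNode r l) = 0) ∧
  (∀ (i : Fin k) (r : V) (l : List V),
      cH (downNode r l, snkNode i) = 0 ∧ ℓH (downNode r l, snkNode i) = 0)

theorem isWalk_append {W : Type} {E : Set (W × W)} :
    ∀ {p q : List (W × W)} {a b d : W}, IsWalk E a b p → IsWalk E b d q → IsWalk E a d (p ++ q)
  | [], q, a, b, d, hp, hq => by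
      have hab : a = b := hp
      subst hab
      exact hq
  | e :: p, q, a, b, d, hp, hq => ⟨hp.1, hp.2.1, isWalk_append hp.2.2 hq⟩

theorem isWalk_flatMap {W U : Type} {E : Set (W × W)} {F : Set (U × U)} (π : W → U)
    (f : W × W → List (U × U)) (hf : ∀ e ∈ E, IsWalk F (π e.1) (π e.2) (f e)) :
    ∀ {p : List (W × W)} {a b : W}, IsWalk E a b p → IsWalk F (π a) (π b) (p.flatMap f)
  | [], a, b, hp => by
      have hab : a = b := hp
      subst hab
      exact rfl
  | e :: p, a, b, hp => by
      obtain ⟨h1, h2, h3⟩ := hp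
      subst h1
      rw [List.flatMap_cons]
      exact isWalk_append (hf e h2) (isWalk_flatMap π f hf h3)

theorem isWalk_mem {W : Type} {E : Set (W × W)} :
    ∀ {p : List (W × W)} {a b : W}, IsWalk E a b p → ∀ e ∈ p, e ∈ E
  | [], _, _, _, e, he => by simp at he
  | e' :: p, _, _, hp, e, he => by
      rcases List.mem_cons.1 he with h | h
      · exact h ▸ hp.2.1
      · exact isWalk_mem hp.2.2 e h

/-- The source side of `H`. -/
def UpSide {V : Type} {k : ℕ} : HV V k → Prop
  | Sum.inl _ => True
  | Sum.inr (Sum.inl _) => False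
  | Sum.inr (Sum.inr (Sum.inl _)) => True
  | Sum.inr (Sum.inr (Sum.inr _)) => False

/-- A walk of `H` from the source side to a sink passes through a root. -/
theorem split_at_root {V : Type} {E : Set (V × V)} {h k : ℕ} {src snk : Fin k → V} (i : Fin k) :
    ∀ {p : List (HV V k × HV V k)} {a : HV V k}, UpSide a →
      IsWalk (Hedges E h src snk) a (snkNode i) p →
      ∃ r p₁ p₂, p = p₁ ++ p₂ ∧ IsWalk (Hedges E h src snk) a (upNode r []) p₁ ∧
        IsWalk (Hedges E h src snk) (upNode r []) (snkNode i) p₂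
  | [], a, ha, hp => by
      have hab : a = snkNode i := hp
      subst hab
      exact ha.elim
  | e :: p, a, ha, hp => by
      obtain ⟨h1, h2, h3⟩ := hp
      have step : UpSide e.2 → ∃ r p₁ p₂, e :: p = p₁ ++ p₂ ∧
          IsWalk (Hedges E h src snk) a (upNode r []) p₁ ∧
          IsWalk (Hedges E h src snk) (upNode r []) (snkNode i) p₂ := by
        intro hu
        obtain ⟨r, p₁, p₂, hpp, hw1, hw2⟩ := split_at_root i hu h3
        exact ⟨r, e :: p₁, p₂, by rw [hpp]; rfl, ⟨h1, h2, hw1⟩, hw2⟩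
      have h2' := h2
      rcases h2 with ⟨r, v, l, he, -⟩ | ⟨r, v, l, he, -⟩ | ⟨r, he⟩ | ⟨j, r, l, he, -⟩ |
        ⟨j, r, l, he, -⟩
      · apply step; rw [he]; trivial
      · subst h1; rw [he] at ha; exact ha.elim
      · subst h1
        refine ⟨r, [], e :: p, rfl, ?_, ?_, h2', h3⟩
        · rw [he]; rfl
        · rw [he]
      · apply step; rw [he]; trivial
      · subst h1; rw [he] at ha; exact ha.elim

/-- The vertex of `G` represented by a vertex of `H`. -/
def proj {V : Type} {k : ℕ} (src snk : Fin k → V) : HV V k → V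
  | Sum.inl (r, l) => l.headD r
  | Sum.inr (Sum.inl (r, l)) => l.headD r
  | Sum.inr (Sum.inr (Sum.inl i)) => src i
  | Sum.inr (Sum.inr (Sum.inr i)) => snk i

theorem sum_c_le_upCost {V : Type} (c ℓ : V × V → ℝ) (hl : ∀ e, 0 ≤ ℓ e) (k h : ℕ)
    (i : Fin (h + 1)) (w : List (V × V)) : (w.map c).sum ≤ upCost c ℓ k h i w := by
  unfold upCost
  apply List.sum_le_sum
  intro e _
  have : 0 ≤ (k : ℝ) ^ ((1 : ℝ) - (i : ℕ) / (h : ℝ)) * ℓ e :=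
    mul_nonneg (Real.rpow_nonneg (Nat.cast_nonneg k) _) (hl e)
  linarith

theorem edge_walk {V : Type} (E : Set (V × V)) (c ℓ : V × V → ℝ)
    (hl : ∀ e, 0 ≤ ℓ e) (h k : ℕ) (src snk : Fin k → V)
    (c' ℓ' c'' ℓ'' : (Fin (h + 1) × V) × (Fin (h + 1) × V) → ℝ)
    (hup : UpCostsValid E c ℓ k h c' ℓ') (hdown : DownCostsValid E c ℓ k h c'' ℓ'')
    (cH ℓH : (HV V k × HV V k) → ℝ)
    (hH : HCostsValid E h src snk c' ℓ' c'' ℓ'' cH ℓH) (e : HV V k × HV V k)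
    (he : e ∈ Hedges E h src snk) :
    ∃ w, IsWalk E (proj src snk e.1) (proj src snk e.2) w ∧ (w.map c).sum ≤ cH e ∧
      (w.map ℓ).sum = ℓH e := by
  obtain ⟨H1, H2, H3, H4, H5⟩ := hH
  rcases he with ⟨r, v, l, rfl, hlen, hw⟩ | ⟨r, v, l, rfl, hlen, hw⟩ | ⟨r, rfl⟩ |
    ⟨j, r, l, rfl, hlen, hw⟩ | ⟨j, r, l, rfl, hlen, hw⟩
  · obtain ⟨w, hw1, -, hw2, hw3⟩ := hup _ _ _ _
      ⟨⟨l.length + 1, by omega⟩, ⟨l.length, by omega⟩, v, l.headD r, rfl, rfl, hw⟩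
    obtain ⟨e1, e2⟩ := H1 r v l hlen hw
    refine ⟨w, hw1, ?_, ?_⟩
    · rw [e1, hw2]; exact sum_c_le_upCost c ℓ hl _ _ _ _
    · rw [e2, hw3]
  · obtain ⟨w, hw1, -, hw2, hw3⟩ := hdown _ _ _ _
      ⟨⟨l.length + 1, by omega⟩, ⟨l.length, by omega⟩, l.headD r, v, rfl, rfl, hw⟩
    obtain ⟨e1, e2⟩ := H2 r v l hlen hw
    refine ⟨w, hw1, ?_, ?_⟩
    · rw [e1, hw2]; exact sum_c_le_upCost c ℓ hl _ _ _ _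
    · rw [e2, hw3]
  · refine ⟨[], rfl, ?_, ?_⟩
    · simp [(H3 r).1]
    · simp [(H3 r).2]
  · refine ⟨[], hw.symm, ?_, ?_⟩
    · simp [(H4 j r l).1]
    · simp [(H4 j r l).2]
  · refine ⟨[], hw, ?_, ?_⟩
    · simp [(H5 j r l).1]
    · simp [(H5 j r l).2]

theorem sum_toFinset_le {A : Type} [DecidableEq A] (c : A → ℝ) (hc : ∀ e, 0 ≤ c e) (w : List A) :
    ∑ e ∈ w.toFinset, c e ≤ (w.map c).sum := by
  induction w with
  | nil => simp
  | cons a w ih =>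
    rw [List.toFinset_cons, List.map_cons, List.sum_cons]
    by_cases ha : a ∈ w.toFinset
    · rw [Finset.insert_eq_of_mem ha]
      linarith [hc a]
    · rw [Finset.sum_insert ha]
      linarith

theorem sum_biUnion_le' {A B : Type} [DecidableEq A] [DecidableEq B] (c : A → ℝ)
    (hc : ∀ e, 0 ≤ c e) (s : Finset B) (f : B → Finset A) :
    ∑ e ∈ s.biUnion f, c e ≤ ∑ b ∈ s, ∑ e ∈ f b, c e := by
  induction s using Finset.induction_on with
  | empty => simp
  | insert b s hb ih =>
    rw [Finset.biUnion_insert, Finset.sum_insert hb]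
    have h1 := Finset.sum_union_inter (s₁ := f b) (s₂ := s.biUnion f) (f := c)
    have h2 : 0 ≤ ∑ e ∈ f b ∩ s.biUnion f, c e := Finset.sum_nonneg fun e _ => hc e
    linarith

theorem objVal_flatMap_le {A B : Type} [DecidableEq A] [DecidableEq B] (c ℓ : A → ℝ)
    (hc : ∀ e, 0 ≤ c e) (cH ℓH : B → ℝ) {k : ℕ} (P : Fin k → List B) (f : B → List A)
    (h1 : ∀ i, ∀ e ∈ P i, ((f e).map c).sum ≤ cH e)
    (h2 : ∀ i, ∀ e ∈ P i, ((f e).map ℓ).sum = ℓH e) :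
    objVal c ℓ (fun i => (P i).flatMap f) ≤ objVal cH ℓH P := by
  unfold objVal
  apply add_le_add
  · have : (Finset.univ.biUnion fun i => ((P i).flatMap f).toFinset) =
        (Finset.univ.biUnion fun i => (P i).toFinset).biUnion fun e => (f e).toFinset := by
      ext a
      simp only [Finset.mem_biUnion, Finset.mem_univ, true_and, List.mem_toFinset,
        List.mem_flatMap]
      constructor
      · rintro ⟨i, b, hb, ha⟩
        exact ⟨b, ⟨i, hb⟩, ha⟩
      · rintro ⟨b, ⟨i, hb⟩, ha⟩
        exact ⟨i, b, hb, ha⟩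
    rw [this]
    refine (sum_biUnion_le' c hc _ _).trans (Finset.sum_le_sum fun b hb => ?_)
    simp only [Finset.mem_biUnion, Finset.mem_univ, true_and, List.mem_toFinset] at hb
    obtain ⟨i, hb⟩ := hb
    exact (sum_toFinset_le c hc _).trans (h1 i b hb)
  · refine Finset.sum_le_sum fun i _ => le_of_eq ?_
    have key : ∀ p : List B, (∀ e ∈ p, ((f e).map ℓ).sum = ℓH e) →
        ((p.flatMap f).map ℓ).sum = (p.map ℓH).sum := by
      intro p
      induction p with
      | nil => intro _; simp
      | cons b p ih =>
        intro hp
        rw [List.flatMap_cons, List.map_append, List.sum_append, List.map_cons, List.sum_cons,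
          hp b (by simp), ih fun e he => hp e (by simp [he])]
    exact key _ (h2 i)

/-- **From `H`-solutions to junction-tree solutions of `(G,X)`.**  Every feasible
solution of `J = (H, X)` of objective value `φ` can be mapped to a feasible solution
of `(G, X)` — indeed a junction-tree solution, with each pair routed through some
root `ρ i` — of objective value at most `φ`. -/
theorem H_solution_to_junction_solution {V : Type} [Fintype V] [DecidableEq V]
    (E : Set (V × V)) (c ℓ : V × V → ℝ)
    (hc : ∀ e, 0 ≤ c e) (hl : ∀ e, 0 ≤ ℓ e)
    (X : List (V × V)) (h : ℕ) (hh : 1 ≤ h)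
    (c' ℓ' c'' ℓ'' : (Fin (h + 1) × V) × (Fin (h + 1) × V) → ℝ)
    (hup : UpCostsValid E c ℓ X.length h c' ℓ')
    (hdown : DownCostsValid E c ℓ X.length h c'' ℓ'')
    (cH ℓH : (HV V X.length × HV V X.length) → ℝ)
    (hH : HCostsValid E h (fun i => (X.get i).1) (fun i => (X.get i).2) c' ℓ' c'' ℓ'' cH ℓH)
    (P : Fin X.length → List (HV V X.length × HV V X.length))
    (hP : ∀ i, IsWalk (Hedges E h (fun j => (X.get j).1) (fun j => (X.get j).2))
        (srcNode i) (snkNode i) (P i)) :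
    ∃ (P' : Fin X.length → List (V × V)) (ρ : Fin X.length → V),
      (∀ i, IsWalk E (X.get i).1 (X.get i).2 (P' i)) ∧
      (∀ i, ∃ w₁ w₂, P' i = w₁ ++ w₂ ∧
          IsWalk E (X.get i).1 (ρ i) w₁ ∧ IsWalk E (ρ i) (X.get i).2 w₂) ∧
      objVal c ℓ P' ≤ objVal cH ℓH P := by
  classical
  have hedge := edge_walk E c ℓ hl h X.length _ _ c' ℓ' c'' ℓ'' hup hdown cH ℓH hH
  choose! f hf1 hf2 hf3 using hedge
  have hsplit := fun i => split_at_root i (a := srcNode i) trivial (hP i)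
  choose ρ p₁ p₂ hp hw1 hw2 using hsplit
  refine ⟨fun i => (P i).flatMap f, ρ, fun i => ?_, fun i => ?_, ?_⟩
  · exact isWalk_flatMap _ f hf1 (hP i)
  · refine ⟨(p₁ i).flatMap f, (p₂ i).flatMap f, ?_, ?_, ?_⟩
    · show (P i).flatMap f = _
      rw [← List.flatMap_append, ← hp i]
    · exact isWalk_flatMap _ f hf1 (hw1 i)
    · exact isWalk_flatMap _ f hf1 (hw2 i)
  · exact objVal_flatMap_le c ℓ hc cH ℓH P f
      (fun i e he => hf2 e (isWalk_mem (hP i) e he))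
      (fun i e he => hf3 e (isWalk_mem (hP i) e he))

end BaB
end

section
/- Let f : [0,∞) → [0,∞) be nondecreasing and subadditive (f(x+y) ≤ f(x) + f(y) for all x, y ≥ 0). Then: (a) for every t > 0 and every x ≥ 0, f(x) ≤ f(t) + (f(t)/t)·x; and (b) for every ε > 0 and every D ≥ 1 there exists a finite set S of positive reals such that the function g(x) := min_{t∈S} ( f(t) + (f(t)/t)·x ) satisfies f(x) ≤ g(x) ≤ (2+ε)·f(x) for every x ∈ [1, D]. (Part (b) is the pointwise form of the statement that every buy-at-bulk instance is equivalent, up to a factor 2+ε in objective value for every feasible solution, to a two-metric network design instance obtained by replacing each edge with parallel copies carrying fixed cost f(t) and per-unit length f(t)/t for t ∈ S.) -/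
/-- **Two-metric approximation of subadditive cost functions.**  Let
`f : [0,∞) → [0,∞)` be nondecreasing and subadditive.  Then
(a) for every `t > 0` and `x ≥ 0`, `f x ≤ f t + (f t / t) · x`; and
(b) for every `ε > 0` and `D ≥ 1` there is a nonempty finite set `S` of positive
reals such that `g x := min_{t ∈ S} (f t + (f t / t) · x)` satisfies
`f x ≤ g x ≤ (2 + ε) · f x` for all `x ∈ [1, D]`.  (This is the pointwise form of
the reduction of buy-at-bulk to two-metric network design, replacing each edge by
parallel copies with fixed cost `f t` and per-unit length `f t / t`, `t ∈ S`.) -/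
theorem subadditive_two_metric_approx (f : ℝ → ℝ)
    (hnonneg : ∀ x, 0 ≤ x → 0 ≤ f x)
    (hmono : ∀ x y, 0 ≤ x → x ≤ y → f x ≤ f y)
    (hsub : ∀ x y, 0 ≤ x → 0 ≤ y → f (x + y) ≤ f x + f y) :
    (∀ t : ℝ, 0 < t → ∀ x : ℝ, 0 ≤ x → f x ≤ f t + f t / t * x) ∧
    (∀ ε : ℝ, 0 < ε → ∀ D : ℝ, 1 ≤ D →
      ∃ (S : Finset ℝ) (hS : S.Nonempty), (∀ t ∈ S, 0 < t) ∧
        ∀ x : ℝ, 1 ≤ x → x ≤ D →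
          f x ≤ S.inf' hS (fun t => f t + f t / t * x) ∧
          S.inf' hS (fun t => f t + f t / t * x) ≤ (2 + ε) * f x) := by
  have ha : ∀ t : ℝ, 0 < t → ∀ x : ℝ, 0 ≤ x → f x ≤ f t + f t / t * x := by
    intro t ht x hx
    have hn : ∀ n : ℕ, f (((n : ℝ) + 1) * t) ≤ ((n : ℝ) + 1) * f t := by
      intro n
      induction n with
      | zero => simp
      | succ k ih =>
        have h := hsub (((k : ℝ) + 1) * t) t (by positivity) ht.le
        have e : ((k : ℝ) + 1) * t + t = (((k + 1 : ℕ) : ℝ) + 1) * t := by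
          push_cast; ring
        rw [e] at h
        push_cast at h ⊢
        linarith
    have hxt : 0 ≤ x / t := by positivity
    have h1 := Nat.lt_floor_add_one (x / t)
    have h2 := Nat.floor_le hxt
    have h3 : x ≤ ((⌊x / t⌋₊ : ℝ) + 1) * t := ((div_lt_iff₀ ht).1 h1).le
    have h4 := hmono x _ hx h3
    have h5 := hn ⌊x / t⌋₊
    have h6 := mul_le_mul_of_nonneg_right h2 (hnonneg t ht.le)
    have h7 : x / t * f t = f t / t * x := by ring
    linarith
  refine ⟨ha, ?_⟩
  intro ε hε D hD
  refine ⟨(Finset.range (⌊(D - 1) / ε⌋₊ + 1)).image (fun i : ℕ => 1 + (i : ℝ) * ε),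
    ⟨_, Finset.mem_image_of_mem _ (Finset.mem_range.2 (Nat.succ_pos _))⟩, ?_, ?_⟩
  · intro t ht
    obtain ⟨i, -, rfl⟩ := Finset.mem_image.1 ht
    positivity
  · intro x hx hxD
    constructor
    · apply Finset.le_inf'
      intro t ht
      obtain ⟨i, -, rfl⟩ := Finset.mem_image.1 ht
      exact ha _ (by positivity) x (by linarith)
    · have hle : ⌊(x - 1) / ε⌋₊ ≤ ⌊(D - 1) / ε⌋₊ := by
        apply Nat.floor_le_floor
        gcongr
      have h0 : 0 ≤ (x - 1) / ε := div_nonneg (by linarith) hε.le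
      have h1 := (div_lt_iff₀ hε).1 (Nat.lt_floor_add_one ((x - 1) / ε))
      have h2 := (le_div_iff₀ hε).1 (Nat.floor_le h0)
      refine (Finset.inf'_le _ (Finset.mem_image_of_mem _
        (Finset.mem_range.2 (Nat.lt_succ_of_le hle)))).trans ?_
      have h3 : 0 ≤ (⌊(x - 1) / ε⌋₊ : ℝ) * ε := by positivity
      generalize (⌊(x - 1) / ε⌋₊ : ℝ) = n at *
      have ht : 0 < 1 + n * ε := by linarith
      have hf := hmono (1 + n * ε) x ht.le (by linarith)
      have hr : x / (1 + n * ε) ≤ 1 + ε := by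
        rw [div_le_iff₀ ht]
        nlinarith [mul_nonneg hε.le h3]
      have hr0 : 0 ≤ x / (1 + n * ε) := div_nonneg (by linarith) ht.le
      have h6 := mul_le_mul hf hr hr0 (hnonneg x (by linarith))
      have h7 : f (1 + n * ε) / (1 + n * ε) * x = f (1 + n * ε) * (x / (1 + n * ε)) := by
        ring
      rw [h7]
      linarith
end
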